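/- arXiv:2012.15319 — 3 statements merged into one kernel-verified Lean document; each statement's English description precedes it below -/
import Mathlib

section
/- Let q be an odd prime power and ℓ an odd prime not dividing q. Let f₁,…,f_{ℓ−1} ∈ 𝔽_q[x] be pairwise coprime squarefree polynomials of degrees d₁,…,d_{ℓ−1}, set d = d₁+⋯+d_{ℓ−1}, and assume d ≥ 1, that ∑_{i=1}^{ℓ−1} i·d_i ≡ 0 (mod ℓ), and that the product ∏_{i=1}^{ℓ−1} f_i^i is not equal to a unit times a power of a single irreducible polynomial. For each i let F_i(u,v) = v^{d_i}·f_i(u/v) ∈ 𝔽_q[u,v] be the degree-d_i homogenization of f_i. Then for every ε > 0 there exist a real constant B > 0 and a natural number N such that for every integer n > N, the number of (ℓ−1)-tuples (D₁,…,D_{ℓ−1}) of pairwise coprime squarefree polynomials in 𝔽_q[t] with ∑_{i} deg D_i ≤ n for which there exist u, v ∈ 𝔽_q[t] with D_i = F_i(u,v) for every i, is at least B · q^{(2n/d) − ε}. -/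
open Polynomial

namespace SE
open scoped Classical
set_option linter.unusedSectionVars false
set_option linter.unusedVariables false
set_option linter.unusedSimpArgs false
set_option linter.style.haveILetI false
variable {K : Type} [Field K] [Fintype K]

/-- polynomials of degree `< M` -/
noncomputable def S (K : Type) [Field K] [Fintype K] (M : ℕ) : Finset K[X] :=
  Finset.univ.image (fun c : Fin M → K => (((degreeLTEquiv K M).symm c : degreeLT K M) : K[X]))

lemma mem_S {M : ℕ} {a : K[X]} : a ∈ S K M ↔ a.degree < M := by
  rw [← mem_degreeLT]
  simp only [S, Finset.mem_image, Finset.mem_univ, true_and]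
  constructor
  · rintro ⟨c, rfl⟩; exact Subtype.property _
  · intro h
    exact ⟨degreeLTEquiv K M ⟨a, h⟩, by simp⟩

lemma card_S (M : ℕ) : (S K M).card = Fintype.card K ^ M := by
  rw [S, Finset.card_image_of_injective]
  · simp
  · intro a b h
    exact (degreeLTEquiv K M).symm.injective (Subtype.ext h)

lemma mem_S_iff {M : ℕ} {a : K[X]} (ha : a ≠ 0) : a ∈ S K M ↔ a.natDegree < M := by
  rw [mem_S, degree_eq_natDegree ha]; exact_mod_cast Iff.rfl

lemma sub_mem_S {M : ℕ} {a b : K[X]} (ha : a ∈ S K M) (hb : b ∈ S K M) : a - b ∈ S K M := by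
  rw [mem_S] at *
  exact lt_of_le_of_lt (degree_sub_le _ _) (max_lt ha hb)

lemma add_mem_S {M : ℕ} {a b : K[X]} (ha : a ∈ S K M) (hb : b ∈ S K M) : a + b ∈ S K M := by
  rw [mem_S] at *
  exact lt_of_le_of_lt (degree_add_le _ _) (max_lt ha hb)

/-- residue class counting -/
lemma card_class {M : ℕ} (g : K[X]) (hg : g ≠ 0) (T : Finset K[X]) (hT : T ⊆ S K M)
    (h : ∀ a ∈ T, ∀ b ∈ T, g ∣ a - b) : T.card ≤ Fintype.card K ^ (M - g.natDegree) := by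
  rw [← card_S]
  refine Finset.card_le_card_of_injOn (fun a => a / g) ?_ ?_
  · intro a ha
    have ha' := hT ha
    simp only [Finset.mem_coe]
    by_cases h0 : a / g = 0
    · rw [h0, mem_S]; simp [WithBot.bot_lt_coe]
    · have ha0 : a ≠ 0 := by rintro rfl; simp at h0
      rw [mem_S_iff h0]
      rw [mem_S_iff ha0] at ha'
      have hd : g.degree ≤ a.degree := by
        by_contra hc
        exact h0 ((Polynomial.div_eq_zero_iff hg).2 (not_le.1 hc))
      have h1 := Polynomial.degree_add_div hg hd
      rw [degree_eq_natDegree hg, degree_eq_natDegree h0, degree_eq_natDegree ha0] at h1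
      have h2 : g.natDegree + (a / g).natDegree = a.natDegree := by exact_mod_cast h1
      omega
  · intro a ha b hb hab
    have h1 : a % g = b % g := by
      have := (EuclideanDomain.mod_eq_zero).2 (h a ha b hb)
      rw [Polynomial.sub_mod] at this
      exact sub_eq_zero.1 this
    have e1 := EuclideanDomain.div_add_mod a g
    have e2 := EuclideanDomain.div_add_mod b g
    simp only at hab
    rw [← e1, ← e2, hab, h1]

lemma mod_eq_iff {g a b : K[X]} : a % g = b % g ↔ g ∣ a - b := by
  rw [← EuclideanDomain.mod_eq_zero, Polynomial.sub_mod, sub_eq_zero]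

lemma mod_mod' (a g : K[X]) : a % g % g = a % g := by
  rw [mod_eq_iff]
  refine ⟨-(a / g), ?_⟩
  have := EuclideanDomain.div_add_mod a g
  linear_combination this

/-- number of root classes modulo an irreducible -/
lemma card_root_classes (P : K[X]) (hP : Irreducible P) (h : K[X][X]) (c : K) (hc : c ≠ 0)
    (hlc : h.leadingCoeff = C c) (T : Finset K[X]) (hT : ∀ x ∈ T, P ∣ h.eval x) :
    (T.image (fun x => x % P)).card ≤ h.natDegree := by
  classical
  haveI : Fact (Irreducible P) := ⟨hP⟩
  set φ := AdjoinRoot.mk P with hφ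
  have hlc' : φ h.leadingCoeff ≠ 0 := by
    rw [hlc]
    intro h0
    rw [hφ, AdjoinRoot.mk_eq_zero] at h0
    exact hP.not_isUnit (isUnit_of_dvd_unit h0 (isUnit_C.2 hc.isUnit))
  have hne : h.map φ ≠ 0 := by
    intro h0
    apply hlc'
    have := congrArg (fun r => r.coeff h.natDegree) h0
    simpa using this
  calc (T.image (fun x => x % P)).card ≤ (h.map φ).roots.toFinset.card := by
        refine Finset.card_le_card_of_injOn (fun x => φ x) ?_ ?_
        · intro y hy
          simp only [Finset.coe_image, Set.mem_image, Finset.mem_coe] at hy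
          obtain ⟨x, hx, rfl⟩ := hy
          have h1 : φ (x % P) = φ x := by
            rw [hφ, AdjoinRoot.mk_eq_mk]
            rw [← mod_eq_iff, mod_mod']
          simp only [Finset.mem_coe, Multiset.mem_toFinset]
          rw [mem_roots hne, IsRoot.def, h1, eval_map, eval₂_at_apply, hφ, AdjoinRoot.mk_eq_zero]
          exact hT x hx
        · intro a ha b hb hab
          simp only [Finset.coe_image, Set.mem_image, Finset.mem_coe] at ha hb
          obtain ⟨x, hx, rfl⟩ := ha
          obtain ⟨y, hy, rfl⟩ := hb
          simp only [hφ, AdjoinRoot.mk_eq_mk] at hab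
          have := mod_eq_iff.2 hab
          simpa only [mod_mod'] using this
    _ ≤ Multiset.card (h.map φ).roots := Multiset.toFinset_card_le _
    _ ≤ (h.map φ).natDegree := card_roots' _
    _ ≤ h.natDegree := natDegree_map_le

/-- monic irreducibles of degree `k` -/
noncomputable def Irr (K : Type) [Field K] [Fintype K] (k : ℕ) : Finset K[X] :=
  by classical exact (S K (k+1)).filter (fun P => P.Monic ∧ Irreducible P ∧ P.natDegree = k)

lemma mem_Irr {k : ℕ} {P : K[X]} : P ∈ Irr K k ↔ P.Monic ∧ Irreducible P ∧ P.natDegree = k := by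
  classical
  simp only [Irr, Finset.mem_filter, and_iff_right_iff_imp]
  rintro ⟨h1, h2, h3⟩
  rw [mem_S_iff h1.ne_zero]; omega

lemma irr_coprime {P R : K[X]} (hP : P.Monic) (hR : R.Monic) (iP : Irreducible P)
    (iR : Irreducible R) (h : P ≠ R) : IsCoprime P R := by
  rw [iP.coprime_iff_not_dvd]
  intro hd
  exact h (eq_of_monic_of_associated hP hR (iP.associated_of_dvd iR hd))

lemma card_Irr (k : ℕ) (hk : 0 < k) : k * (Irr K k).card ≤ Fintype.card K ^ k := by
  have hq : 1 < Fintype.card K := Fintype.one_lt_card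
  have h1 : ∏ P ∈ Irr K k, P ∣ X ^ (Nat.card K) ^ k - X := by
    apply Finset.prod_dvd_of_coprime
    · intro P hP R hR hne
      have hP := mem_Irr.1 hP
      have hR := mem_Irr.1 hR
      exact irr_coprime hP.1 hR.1 hP.2.1 hR.2.1 hne
    · intro P hP
      have hP := mem_Irr.1 hP
      exact hP.2.1.natDegree_dvd_iff_dvd_X_pow_card_pow_sub_X.1 (by rw [hP.2.2])
  have hqk : 1 < Nat.card K ^ k := by
    rw [Nat.card_eq_fintype_card]; exact Nat.one_lt_pow hk.ne' hq
  have h2 := natDegree_le_of_dvd h1 (FiniteField.X_pow_card_sub_X_ne_zero K hqk)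
  rw [FiniteField.X_pow_card_sub_X_natDegree_eq K hqk, Nat.card_eq_fintype_card,
    natDegree_prod_of_monic _ _ (fun P hP => (mem_Irr.1 hP).1)] at h2
  rw [Finset.sum_congr rfl (fun P hP => (mem_Irr.1 hP).2.2)] at h2
  simpa [mul_comm] using h2

end SE

namespace SE
open scoped Classical
set_option linter.unusedSectionVars false
set_option linter.unusedVariables false
set_option linter.unusedSimpArgs false
set_option linter.style.haveILetI false
variable {K : Type} [Field K] [Fintype K]

noncomputable def hpoly (f v : K[X]) : K[X][X] := (f.map C).scaleRoots v

/-- value of the homogenization -/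
noncomputable def H (f u v : K[X]) : K[X] := (hpoly f v).eval u

lemma natDegree_hpoly (f v : K[X]) : (hpoly f v).natDegree = f.natDegree := by
  rw [hpoly, natDegree_scaleRoots, natDegree_map_eq_of_injective C_injective]

lemma leadingCoeff_hpoly (f v : K[X]) : (hpoly f v).leadingCoeff = C f.leadingCoeff := by
  rw [hpoly, leadingCoeff_scaleRoots, leadingCoeff_map_of_injective C_injective]

lemma H_eq_sum (f u v : K[X]) : H f u v = ∑ j ∈ Finset.range (f.natDegree + 1),
    C (f.coeff j) * u ^ j * v ^ (f.natDegree - j) := by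
  rw [H, eval_eq_sum_range, natDegree_hpoly]
  refine Finset.sum_congr rfl fun j _ => ?_
  rw [hpoly, coeff_scaleRoots, coeff_map, natDegree_map_eq_of_injective C_injective]
  ring

lemma H_one (u v : K[X]) : H 1 u v = 1 := by simp [H_eq_sum]

lemma H_mul (f g u v : K[X]) : H (f * g) u v = H f u v * H g u v := by
  rw [H, H, H, hpoly, Polynomial.map_mul, mul_scaleRoots_of_noZeroDivisors, eval_mul]; rfl

lemma H_prod {ι : Type*} (s : Finset ι) (f : ι → K[X]) (u v : K[X]) :
    H (∏ i ∈ s, f i) u v = ∏ i ∈ s, H (f i) u v := by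
  induction s using Finset.induction_on with
  | empty => simp [H_one]
  | insert a s ha ih => rw [Finset.prod_insert ha, Finset.prod_insert ha, H_mul, ih]

lemma H_gv (f g v : K[X]) : H f (g * v) v = v ^ f.natDegree * f.comp g := by
  rw [H, hpoly, mul_comm g v, scaleRoots_eval_mul, natDegree_map_eq_of_injective C_injective,
    eval_map, comp]

lemma H_congr (f u w v : K[X]) : u - w ∣ H f u v - H f w v := sub_dvd_eval_sub _ _ _

lemma H_sub_lead (f u v : K[X]) : v ∣ H f u v - C f.leadingCoeff * u ^ f.natDegree := by
  rw [H_eq_sum, Finset.sum_range_succ]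
  simp only [Nat.sub_self, pow_zero, mul_one, coeff_natDegree, add_sub_cancel_right]
  refine Finset.dvd_sum fun j hj => ?_
  have := Finset.mem_range.1 hj
  exact Dvd.dvd.mul_left (dvd_pow_self v (by omega)) _

lemma dvd_u_of_dvd_v {f u v P : K[X]} (hf : f ≠ 0) (hP : Irreducible P) (hv : P ∣ v)
    (hH : P ∣ H f u v) : P ∣ u := by
  have h1 := (dvd_sub_right hH).1 (hv.trans (H_sub_lead f u v))
  rcases hP.prime.dvd_or_dvd h1 with h | h
  · exact absurd (isUnit_of_dvd_unit h (isUnit_C.2 (leadingCoeff_ne_zero.2 hf).isUnit)) hP.not_isUnit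
  · exact hP.prime.dvd_of_dvd_pow h

lemma natDegree_H (f u v : K[X]) (hf : f ≠ 0) (hu : u ≠ 0) (hv : v.degree < u.degree) :
    (H f u v).natDegree = f.natDegree * u.natDegree := by
  have hlead : (C f.leadingCoeff * u ^ f.natDegree).degree = (f.natDegree * u.natDegree : ℕ) := by
    rw [degree_C_mul (leadingCoeff_ne_zero.2 hf), degree_pow, degree_eq_natDegree hu]
    simp
  apply natDegree_eq_of_degree_eq_some
  rw [H_eq_sum, Finset.sum_range_succ]
  simp only [Nat.sub_self, pow_zero, mul_one, coeff_natDegree]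
  rw [degree_add_eq_right_of_degree_lt, hlead]
  rw [hlead]
  refine lt_of_le_of_lt (degree_sum_le _ _) ?_
  rw [Finset.sup_lt_iff (WithBot.bot_lt_coe _)]
  intro j hj
  have hj := Finset.mem_range.1 hj
  by_cases h0 : C (f.coeff j) * u ^ j * v ^ (f.natDegree - j) = 0
  · rw [h0, degree_zero]; exact WithBot.bot_lt_coe _
  · have hv0 : v ≠ 0 := by
      rintro rfl
      rw [zero_pow (by omega), mul_zero] at h0
      exact h0 rfl
    have hc : f.coeff j ≠ 0 := by
      intro hc; rw [hc] at h0; simp at h0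
    rw [degree_eq_natDegree h0, natDegree_mul (mul_ne_zero (by simpa using hc) (pow_ne_zero _ hu))
      (pow_ne_zero _ hv0), natDegree_C_mul hc, natDegree_pow, natDegree_pow]
    have hlt := natDegree_lt_natDegree hv0 hv
    have : j * u.natDegree + (f.natDegree - j) * v.natDegree < f.natDegree * u.natDegree := by
      have h2 : (f.natDegree - j) * v.natDegree < (f.natDegree - j) * u.natDegree :=
        Nat.mul_lt_mul_of_pos_left hlt (by omega)
      have h3 : j * u.natDegree + (f.natDegree - j) * u.natDegree
          = f.natDegree * u.natDegree := by rw [← add_mul]; congr 1; omega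
      omega
    exact_mod_cast this

lemma natDegree_H_le (f u v : K[X]) (m : ℕ) (hu : u.natDegree ≤ m) (hv : v.natDegree ≤ m) :
    (H f u v).natDegree ≤ f.natDegree * m := by
  rw [H_eq_sum]
  refine natDegree_sum_le_of_forall_le _ _ fun j hj => ?_
  have hj := Finset.mem_range.1 hj
  calc _ ≤ (C (f.coeff j) * u ^ j).natDegree + (v ^ (f.natDegree - j)).natDegree := natDegree_mul_le
    _ ≤ (u ^ j).natDegree + (v ^ (f.natDegree - j)).natDegree := by
        gcongr; exact natDegree_C_mul_le _ _
    _ ≤ j * m + (f.natDegree - j) * m := by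
        gcongr
        · exact natDegree_pow_le_of_le _ hu
        · exact natDegree_pow_le_of_le _ hv
    _ = f.natDegree * m := by rw [← add_mul]; congr 1; omega

/-- the dehomogenization modulo powers of `P` -/
lemma exists_g {f u v P : K[X]} (hP : Irreducible P) (hv : ¬ P ∣ v) (e : ℕ)
    (hH : P ^ e ∣ H f u v) : ∃ g, P ^ e ∣ u - g * v ∧ P ^ e ∣ f.comp g := by
  have hc : IsCoprime (P ^ e) v := ((hP.coprime_iff_not_dvd).2 hv).pow_left
  obtain ⟨a, w, hw⟩ := hc
  have h1 : P ^ e ∣ u - u * w * v := ⟨u * a, by linear_combination (-u) * hw⟩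
  refine ⟨u * w, h1, ?_⟩
  have h2 := h1.trans (H_congr f u (u * w * v) v)
  have h3 := (dvd_sub_right hH).1 h2
  rw [H_gv] at h3
  exact (((hP.coprime_iff_not_dvd).2 hv).pow_left.pow_right).dvd_of_dvd_mul_left h3

lemma not_dvd_deriv_comp {f g P : K[X]} (hf : Squarefree f) (hP : Irreducible P)
    (h : P ∣ f.comp g) : ¬ P ∣ (derivative f).comp g := by
  intro h'
  have hs : f.Separable := PerfectField.separable_iff_squarefree.2 hf
  obtain ⟨a, b, hab⟩ := hs
  have := congrArg (fun r => r.comp g) hab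
  simp only [add_comp, mul_comp, one_comp] at this
  apply hP.not_isUnit
  apply isUnit_of_dvd_one
  rw [← this]
  exact dvd_add (h.mul_left _) (h'.mul_left _)

lemma sq_dvd_sub {f u w v P : K[X]} (hf : Squarefree f) (hP : Irreducible P) (hv : ¬ P ∣ v)
    (h1 : P ^ 2 ∣ H f u v) (h2 : P ^ 2 ∣ H f w v) (h : P ∣ u - w) : P ^ 2 ∣ u - w := by
  obtain ⟨g, hg, hfg⟩ := exists_g hP hv 2 h1
  obtain ⟨k, hk, hfk⟩ := exists_g hP hv 2 h2
  have hPP : P ∣ P ^ 2 := dvd_pow_self _ two_ne_zero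
  have e1 : P ^ 2 ∣ (u - w) - (g - k) * v := by
    have := dvd_sub hg hk
    convert this using 1; ring
  have e2 : P ∣ g - k := by
    have := (dvd_sub_right h).1 (hPP.trans e1)
    exact (hP.prime.dvd_or_dvd this).resolve_right hv
  obtain ⟨z, hz⟩ := e2
  obtain ⟨r, hr⟩ := Polynomial.binomExpansion (f.map C) k (g - k)
  have hcomp : ∀ (F x : K[X]), (F.map C).eval x = F.comp x := fun F x => by rw [eval_map, comp]
  rw [derivative_map, hcomp, hcomp, hcomp, add_sub_cancel] at hr
  have e3 : P ^ 2 ∣ (derivative f).comp k * (g - k) := by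
    have : (derivative f).comp k * (g - k) = f.comp g - f.comp k - r * z ^ 2 * P ^ 2 := by
      rw [hr, hz]; ring
    rw [this]
    exact dvd_sub (dvd_sub hfg hfk) (dvd_mul_left _ _)
  have e4 : P ∣ z := by
    rw [hz] at e3
    have : P * P ∣ P * ((derivative f).comp k * z) := by convert e3 using 1 <;> ring
    have := (mul_dvd_mul_iff_left hP.ne_zero).1 this
    exact (hP.prime.dvd_or_dvd this).resolve_left (not_dvd_deriv_comp hf hP (hPP.trans hfk))
  have e5 : P ^ 2 ∣ (g - k) * v := by
    rw [hz, pow_two]; exact (mul_dvd_mul_left _ e4).mul_right _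
  simpa using dvd_add e1 e5

lemma dvd_H_deriv {f u v P : K[X]} (hf : Squarefree f) (hd : f.natDegree ≠ 0)
    (hP : Irreducible P) (hv : ¬ P ∣ v)
    (h1 : P ^ 2 ∣ H f u v) : P ∣ H f (derivative u) (derivative v) := by
  obtain ⟨g, hg, hfg⟩ := exists_g hP hv 2 h1
  have hPP : P ∣ P ^ 2 := dvd_pow_self _ two_ne_zero
  have key : ∀ x : K[X], P ^ 2 ∣ x → P ∣ derivative x := by
    rintro x ⟨y, rfl⟩
    rw [derivative_mul, derivative_pow]
    refine dvd_add ?_ ?_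
    · refine Dvd.dvd.mul_right (Dvd.dvd.mul_right (Dvd.dvd.mul_left ?_ _) _) _
      simp
    · exact hPP.mul_right _
  have k1 := key _ hfg
  rw [derivative_comp] at k1
  have k2 : P ∣ derivative g :=
    (hP.prime.dvd_or_dvd k1).resolve_right (not_dvd_deriv_comp hf hP (hPP.trans hfg))
  have k3 := key _ hg
  rw [derivative_sub, derivative_mul] at k3
  have k4 : P ∣ derivative u - g * derivative v := by
    have := dvd_add k3 (k2.mul_right v)
    convert this using 1; ring
  have k5 := k4.trans (H_congr f (derivative u) (g * derivative v) (derivative v))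
  rw [H_gv] at k5
  have k6 : P ∣ derivative v ^ f.natDegree * f.comp g := (hPP.trans hfg).mul_left _
  simpa using dvd_add k5 k6

end SE

namespace SE
open scoped Classical
set_option linter.unusedSectionVars false
set_option linter.unusedVariables false
set_option linter.unusedSimpArgs false
set_option linter.style.haveILetI false
variable {K : Type} [Field K] [Fintype K]

/-- classical filter -/
noncomputable def flt {α : Type*} (A : Finset α) (p : α → Prop) : Finset α :=
  @Finset.filter α p (fun _ => Classical.propDecidable _) A

lemma mem_flt {α : Type*} {A : Finset α} {p : α → Prop} {x : α} : x ∈ flt A p ↔ x ∈ A ∧ p x := by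
  simp [flt]

lemma flt_false {α : Type*} (A : Finset α) : flt A (fun _ => False) = ∅ := by
  simp [flt]

lemma flt_subset {α : Type*} (A : Finset α) (p : α → Prop) : flt A p ⊆ A :=
  fun x hx => (mem_flt.1 hx).1

lemma prod_bound {α β : Type*} (A : Finset α) (B : Finset β) (p : α → β → Prop) (n : ℕ)
    (h : ∀ b ∈ B, (flt A (fun a => p a b)).card ≤ n) :
    (flt (A ×ˢ B) (fun x => p x.1 x.2)).card ≤ n * B.card := by
  refine Finset.card_le_mul_card_image_of_maps_to (f := Prod.snd) ?_ n ?_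
  · intro x hx
    simp only [mem_flt, Finset.mem_product] at hx
    exact hx.1.2
  · intro b hb
    refine le_trans ?_ (h b hb)
    refine Finset.card_le_card_of_injOn Prod.fst ?_ ?_
    · intro x hx
      simp only [Finset.mem_coe, Finset.coe_filter, Finset.mem_filter, mem_flt, Finset.mem_product, Set.mem_ofPred_eq] at hx ⊢
      obtain ⟨⟨⟨h1, h2⟩, h3⟩, rfl⟩ := hx
      exact ⟨h1, h3⟩
    · rintro ⟨x1, x2⟩ hx ⟨y1, y2⟩ hy hxy
      simp only [Finset.coe_filter, Finset.mem_filter, mem_flt, Finset.mem_product, Set.mem_ofPred_eq] at hx hy hxy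
      rw [hxy, hx.2, hy.2]

/-- root-class counting in an affine family -/
lemma card_family {f : K[X]} (hf : f ≠ 0) {U Q v P : K[X]} (hP : Irreducible P) (hPQ : ¬ P ∣ Q)
    (T : Finset K[X]) (hT : ∀ a ∈ T, P ∣ H f (U + Q * a) v) (n : ℕ)
    (hn : ∀ T' ⊆ T, (∀ a ∈ T', ∀ b ∈ T', P ∣ a - b) → T'.card ≤ n) :
    T.card ≤ n * f.natDegree := by
  have h1 := card_root_classes P hP (hpoly f v) f.leadingCoeff (leadingCoeff_ne_zero.2 hf)
    (leadingCoeff_hpoly f v) (T.image (fun a => U + Q * a)) (by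
      intro x hx
      obtain ⟨a, ha, rfl⟩ := Finset.mem_image.1 hx
      exact hT a ha)
  rw [natDegree_hpoly, Finset.image_image] at h1
  refine le_trans (Finset.card_le_mul_card_image (f := (fun x => x % P) ∘ (fun a => U + Q * a)) T n ?_)
    (Nat.mul_le_mul_left _ h1)
  intro y hy
  refine hn _ (Finset.filter_subset _ _) ?_
  intro a ha b hb
  have e : (U + Q * a) % P = (U + Q * b) % P :=
    ((Finset.mem_filter.1 ha).2).trans ((Finset.mem_filter.1 hb).2).symm
  rw [mod_eq_iff] at e
  have e' : P ∣ Q * (a - b) := by convert e using 1; ring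
  exact (hP.prime.dvd_or_dvd e').resolve_left hPQ

lemma card_one {f : K[X]} (hf : f ≠ 0) {U Q v P : K[X]} (hP : Irreducible P) (hPQ : ¬ P ∣ Q)
    (M : ℕ) : (flt (S K M) (fun a => P ∣ H f (U + Q * a) v)).card ≤
      Fintype.card K ^ (M - P.natDegree) * f.natDegree := by
  refine card_family hf hP hPQ _ (fun a ha => (mem_flt.1 ha).2) _ ?_
  intro T' hT' h
  exact card_class P hP.ne_zero T' (hT'.trans (flt_subset _ _)) h

lemma card_two {f : K[X]} (hf : Squarefree f) {U Q v P : K[X]} (hP : Irreducible P)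
    (hPQ : ¬ P ∣ Q) (hv : ¬ P ∣ v)
    (M : ℕ) : (flt (S K M) (fun a => P ^ 2 ∣ H f (U + Q * a) v)).card ≤
      Fintype.card K ^ (M - 2 * P.natDegree) * f.natDegree := by
  have hPP : P ∣ P ^ 2 := dvd_pow_self _ two_ne_zero
  refine card_family hf.ne_zero hP hPQ _ (fun a ha => hPP.trans (mem_flt.1 ha).2) _ ?_
  intro T' hT' h
  rw [← natDegree_pow]
  refine card_class (P ^ 2) (pow_ne_zero _ hP.ne_zero) T'
    (hT'.trans (flt_subset _ _)) ?_
  intro a ha b hb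
  have ha' := (mem_flt.1 (hT' ha)).2
  have hb' := (mem_flt.1 (hT' hb)).2
  have e : U + Q * a - (U + Q * b) = Q * (a - b) := by ring
  have := sq_dvd_sub hf hP hv ha' hb' (by rw [e]; exact (h a ha b hb).mul_left _)
  rw [e] at this
  exact (((hP.coprime_iff_not_dvd).2 hPQ).pow_left).dvd_of_dvd_mul_left this

lemma sq_dvd_of_deriv_zero {P a : K[X]} (hP : Irreducible P) (h : P ∣ a)
    (ha : derivative a = 0) : P ^ 2 ∣ a := by
  obtain ⟨s, rfl⟩ := h
  have hsep : P.Separable := PerfectField.separable_of_irreducible hP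
  rw [derivative_mul] at ha
  have : P ∣ derivative P * s := by
    refine ⟨-derivative s, ?_⟩
    linear_combination ha
  rw [pow_two]
  exact mul_dvd_mul_left _ (IsCoprime.dvd_of_dvd_mul_left hsep this)

lemma card_deriv {f : K[X]} (hf : f ≠ 0) {U Q v P : K[X]} (hP : Irreducible P) (hPQ : ¬ P ∣ Q)
    (M : ℕ) (hM : M < 2 * P.natDegree) (T : Finset K[X]) (hTS : T ⊆ S K M)
    (hT : ∀ a ∈ T, P ∣ H f (U + Q * a) v)
    (hTd : ∀ a ∈ T, ∀ b ∈ T, derivative a = derivative b) : T.card ≤ f.natDegree := by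
  rw [← one_mul f.natDegree]
  refine card_family hf hP hPQ T hT 1 ?_
  intro T' hT' h
  rw [Finset.card_le_one]
  intro a ha b hb
  by_contra hne
  have h2 := sq_dvd_of_deriv_zero hP (h a ha b hb) (by
    rw [derivative_sub, hTd a (hT' ha) b (hT' hb), sub_self])
  have h0 := sub_ne_zero.2 hne
  have h3 := natDegree_le_of_dvd h2 h0
  rw [natDegree_pow] at h3
  have := (mem_S_iff h0).1 (sub_mem_S (hTS (hT' ha)) (hTS (hT' hb)))
  omega


lemma card_deriv_fiber (p : ℕ) [CharP K p] (hp : p.Prime) (N : ℕ) (c : K[X]) :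
    (flt (S K (p * N)) (fun a => derivative a = c)).card ≤ Fintype.card K ^ N := by
  rcases Finset.eq_empty_or_nonempty (flt (S K (p * N)) (fun a => derivative a = c)) with h | ⟨a0, h0⟩
  · rw [h]; simp
  rw [← card_S]
  have h0 := mem_flt.1 h0
  have key : ∀ a ∈ flt (S K (p * N)) (fun a => derivative a = c),
      expand K p (contract p (a - a0)) = a - a0 := by
    intro a ha
    have ha := mem_flt.1 ha
    exact expand_contract p (by rw [derivative_sub, ha.2, h0.2, sub_self]) hp.ne_zero
  refine Finset.card_le_card_of_injOn (fun a => contract p (a - a0)) ?_ ?_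
  · intro a ha
    have k := key a ha
    have ha := mem_flt.1 ha
    simp only [Finset.mem_coe]
    by_cases hz : contract p (a - a0) = 0
    · rw [hz, mem_S]; simp
    · have hne : a - a0 ≠ 0 := by rw [← k]; exact (expand_ne_zero hp.pos).2 hz
      have h1 := (mem_S_iff hne).1 (sub_mem_S ha.1 h0.1)
      rw [← k, natDegree_expand, mul_comm] at h1
      rw [mem_S_iff hz]
      exact Nat.lt_of_mul_lt_mul_left h1
  · intro a ha b hb hab
    have h1 := key a ha
    have h2 := key b hb
    simp only at hab
    rw [hab, h2] at h1
    exact (sub_left_inj.1 h1).symm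

lemma card_deriv_image (p : ℕ) [CharP K p] (hp : p.Prime) (N : ℕ) :
    Fintype.card K ^ N * ((S K (p * N)).image (fun a => derivative a)).card
      ≤ Fintype.card K ^ (p * N) := by
  rw [← card_S (K := K) (p * N)]
  refine Finset.mul_card_image_le_card _ _ ?_
  intro c hc
  obtain ⟨a, ha, rfl⟩ := Finset.mem_image.1 hc
  rw [← card_S]
  refine Finset.card_le_card_of_injOn (fun z => a + expand K p z) ?_ ?_
  · intro z hz
    simp only [Finset.coe_filter, Set.mem_ofPred_eq]
    refine ⟨add_mem_S ha ?_, ?_⟩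
    · by_cases h0 : z = 0
      · rw [h0, map_zero, mem_S, degree_zero]; exact WithBot.bot_lt_coe _
      · rw [mem_S_iff ((expand_ne_zero hp.pos).2 h0), natDegree_expand, mul_comm]
        exact Nat.mul_lt_mul_of_pos_left ((mem_S_iff h0).1 hz) hp.pos
    · rw [derivative_add, derivative_expand]
      simp
  · intro x hx y hy hxy
    exact expand_injective hp.pos (add_left_cancel hxy)

end SE

namespace SE
open scoped Classical
set_option linter.unusedSectionVars false
set_option linter.unusedVariables false
set_option linter.unusedSimpArgs false
set_option linter.style.haveILetI false
variable {K : Type} [Field K] [Fintype K]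

lemma card_Irr_le (k : ℕ) (hk : 0 < k) : (Irr K k).card ≤ Fintype.card K ^ k :=
  le_trans (Nat.le_mul_of_pos_left _ hk) (card_Irr k hk)

lemma union_bound {α : Type*} (A : Finset α) (p : K[X] → α → Prop) (I : Finset ℕ) (n : ℕ → ℕ)
    (hI : ∀ k ∈ I, 0 < k)
    (h : ∀ k ∈ I, ∀ P ∈ Irr K k, (flt A (p P)).card ≤ n k) :
    (flt A (fun x => ∃ k ∈ I, ∃ P ∈ Irr K k, p P x)).card ≤
      ∑ k ∈ I, Fintype.card K ^ k * n k := by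
  have : flt A (fun x => ∃ k ∈ I, ∃ P ∈ Irr K k, p P x) ⊆
      I.biUnion (fun k => (Irr K k).biUnion (fun P => flt A (p P))) := by
    intro x hx
    simp only [mem_flt, Finset.mem_biUnion] at hx ⊢
    obtain ⟨hx, k, hk, P, hP, h⟩ := hx
    exact ⟨k, hk, P, hP, hx, h⟩
  refine (Finset.card_le_card this).trans (Finset.card_biUnion_le.trans ?_)
  refine Finset.sum_le_sum fun k hk => ?_
  refine (Finset.card_biUnion_le_card_mul _ _ _ (h k hk)).trans ?_
  exact Nat.mul_le_mul_right _ (card_Irr_le k (hI k hk))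

lemma geom_bound (q : ℕ) (hq : 2 ≤ q) (a b : ℕ) :
    ∑ k ∈ Finset.Ico (a + 1) b, ((q : ℝ)⁻¹) ^ k ≤ ((q : ℝ)⁻¹) ^ a := by
  have hq' : (2 : ℝ) ≤ q := by exact_mod_cast hq
  have h0 : (0 : ℝ) ≤ (q : ℝ)⁻¹ := by positivity
  have h2 : (q : ℝ)⁻¹ ≤ 1 / 2 := by
    rw [inv_eq_one_div]; exact one_div_le_one_div_of_le (by norm_num) hq'
  refine (geom_sum_Ico_le_of_lt_one h0 (by linarith)).trans ?_
  rw [div_le_iff₀ (by linarith), pow_succ]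
  exact mul_le_mul_of_nonneg_left (by linarith) (by positivity)

variable {f U Q : K[X]}

/-- common prime factor of `u` and `v` -/
lemma E1_bound (M k0 : ℕ) :
    ((flt (S K M ×ˢ S K M) (fun x => ∃ k ∈ Finset.Ico (k0 + 1) M, ∃ P ∈ Irr K k,
      (¬ P ∣ Q ∧ P ∣ U + Q * x.1 ∧ P ∣ x.2))).card : ℝ) ≤
      (Fintype.card K : ℝ) ^ (2 * M) * ((Fintype.card K : ℝ)⁻¹) ^ k0 := by
  have hq : 2 ≤ Fintype.card K := Fintype.one_lt_card
  have hq0 : (Fintype.card K : ℝ) ≠ 0 := by positivity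
  set q := Fintype.card K
  have h1 := union_bound (K := K) (S K M ×ˢ S K M)
    (fun P x => ¬ P ∣ Q ∧ P ∣ U + Q * x.1 ∧ P ∣ x.2) (Finset.Ico (k0 + 1) M)
    (fun k => q ^ (M - k) * q ^ (M - k)) (fun k hk => by
      have := (Finset.mem_Ico.1 hk).1; omega) (by
      intro k hk P hP
      obtain ⟨hm, hi, hk'⟩ := mem_Irr.1 hP
      by_cases hPQ : P ∣ Q
      · simp [hPQ, flt_false]
      have : flt (S K M ×ˢ S K M) (fun x => ¬ P ∣ Q ∧ P ∣ U + Q * x.1 ∧ P ∣ x.2) ⊆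
          (flt (S K M) (fun a => P ∣ U + Q * a)) ×ˢ (flt (S K M) (fun b => P ∣ b)) := by
        intro x hx
        simp only [mem_flt, Finset.mem_product] at hx ⊢
        tauto
      refine (Finset.card_le_card this).trans ?_
      rw [Finset.card_product]
      refine Nat.mul_le_mul ?_ ?_
      · rw [← hk']
        refine card_class P hi.ne_zero _ (flt_subset _ _) ?_
        intro a ha b hb
        have e := dvd_sub (mem_flt.1 ha).2 (mem_flt.1 hb).2
        have e' : P ∣ Q * (a - b) := by convert e using 1; ring
        exact (hi.prime.dvd_or_dvd e').resolve_left hPQ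
      · rw [← hk']
        refine card_class P hi.ne_zero _ (flt_subset _ _) ?_
        intro a ha b hb
        exact dvd_sub (mem_flt.1 ha).2 (mem_flt.1 hb).2)
  have h2 : ((∑ k ∈ Finset.Ico (k0 + 1) M, q ^ k * (q ^ (M - k) * q ^ (M - k)) : ℕ) : ℝ) ≤
      (q : ℝ) ^ (2 * M) * ((q : ℝ)⁻¹) ^ k0 := by
    push_cast
    calc _ = ∑ k ∈ Finset.Ico (k0 + 1) M, (q : ℝ) ^ (2 * M) * ((q : ℝ)⁻¹) ^ k := by
          refine Finset.sum_congr rfl fun k hk => ?_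
          have hk := (Finset.mem_Ico.1 hk).2
          obtain ⟨e, rfl⟩ := Nat.exists_eq_add_of_lt hk
          have : k + e + 1 - k = e + 1 := by omega
          rw [this, inv_pow]
          field_simp
          ring
      _ ≤ _ := by
          rw [← Finset.mul_sum]
          exact mul_le_mul_of_nonneg_left (geom_bound q hq _ _) (by positivity)
  exact le_trans (by exact_mod_cast h1) h2

lemma E2_bound (hf : Squarefree f) (M k0 : ℕ) :
    ((flt (S K M ×ˢ S K M) (fun x => ∃ k ∈ Finset.Ico (k0 + 1) (M / 2 + 1), ∃ P ∈ Irr K k,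
      (¬ P ∣ Q ∧ ¬ P ∣ Q * x.2 ∧ P ^ 2 ∣ H f (U + Q * x.1) (Q * x.2)))).card : ℝ) ≤
      f.natDegree * (Fintype.card K : ℝ) ^ (2 * M) * ((Fintype.card K : ℝ)⁻¹) ^ k0 := by
  have hq : 2 ≤ Fintype.card K := Fintype.one_lt_card
  have hq0 : (Fintype.card K : ℝ) ≠ 0 := by positivity
  set q := Fintype.card K with hqdef
  have h1 := union_bound (K := K) (S K M ×ˢ S K M)
    (fun P x => ¬ P ∣ Q ∧ ¬ P ∣ Q * x.2 ∧ P ^ 2 ∣ H f (U + Q * x.1) (Q * x.2))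
    (Finset.Ico (k0 + 1) (M / 2 + 1))
    (fun k => q ^ (M - 2 * k) * f.natDegree * q ^ M) (fun k hk => by
      have := (Finset.mem_Ico.1 hk).1; omega) (by
      intro k hk P hP
      obtain ⟨hm, hi, hk'⟩ := mem_Irr.1 hP
      rw [hqdef, ← card_S (K := K) M, ← hqdef]
      refine prod_bound (S K M) (S K M)
        (fun a b => ¬ P ∣ Q ∧ ¬ P ∣ Q * b ∧ P ^ 2 ∣ H f (U + Q * a) (Q * b)) _ ?_
      intro b hb
      by_cases hPQ : P ∣ Q
      · simp [hPQ, flt_false]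
      by_cases hPv : P ∣ Q * b
      · simp [hPv, flt_false]
      have := card_two hf (U := U) hi hPQ hPv M
      rw [hk'] at this
      simpa [hPQ, hPv] using this)
  have h2 : ((∑ k ∈ Finset.Ico (k0 + 1) (M / 2 + 1),
      q ^ k * (q ^ (M - 2 * k) * f.natDegree * q ^ M) : ℕ) : ℝ) ≤
      f.natDegree * (q : ℝ) ^ (2 * M) * ((q : ℝ)⁻¹) ^ k0 := by
    push_cast
    calc _ = ∑ k ∈ Finset.Ico (k0 + 1) (M / 2 + 1),
            f.natDegree * (q : ℝ) ^ (2 * M) * ((q : ℝ)⁻¹) ^ k := by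
          refine Finset.sum_congr rfl fun k hk => ?_
          have hk := (Finset.mem_Ico.1 hk).2
          obtain ⟨e, rfl⟩ : ∃ e, M = 2 * k + e := ⟨M - 2 * k, by omega⟩
          have : 2 * k + e - 2 * k = e := by omega
          rw [this, inv_pow]
          field_simp
          ring
      _ ≤ _ := by
          rw [← Finset.mul_sum]
          exact mul_le_mul_of_nonneg_left (geom_bound q hq _ _) (by positivity)
  exact le_trans (by exact_mod_cast h1) h2

/-- few large primes divide a nonzero polynomial -/
lemma card_large_primes (h : K[X]) (h0 : h ≠ 0) (T : Finset K[X]) (L : ℕ)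
    (hT : ∀ P ∈ T, P.Monic ∧ Irreducible P ∧ P ∣ h ∧ L ≤ P.natDegree) :
    T.card * L ≤ h.natDegree := by
  have h1 : ∏ P ∈ T, P ∣ h := by
    apply Finset.prod_dvd_of_coprime
    · intro P hP R hR hne
      exact irr_coprime (hT P hP).1 (hT R hR).1 (hT P hP).2.1 (hT R hR).2.1 hne
    · intro P hP; exact (hT P hP).2.2.1
  have h2 := natDegree_le_of_dvd h1 h0
  rw [natDegree_prod_of_monic _ _ (fun P hP => (hT P hP).1)] at h2
  refine le_trans ?_ h2
  rw [← smul_eq_mul]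
  exact Finset.card_nsmul_le_sum _ _ _ (fun P hP => (hT P hP).2.2.2)

/-- monic irreducible divisors -/
noncomputable def PF (h : K[X]) : Finset K[X] :=
  (UniqueFactorizationMonoid.normalizedFactors h).toFinset

lemma mem_PF {h : K[X]} (h0 : h ≠ 0) {P : K[X]} :
    P ∈ PF h ↔ P.Monic ∧ Irreducible P ∧ P ∣ h := by
  rw [PF, Multiset.mem_toFinset]
  constructor
  · intro hP
    have i := UniqueFactorizationMonoid.irreducible_of_normalized_factor P hP
    refine ⟨?_, i, UniqueFactorizationMonoid.dvd_of_mem_normalizedFactors hP⟩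
    rw [← UniqueFactorizationMonoid.normalize_normalized_factor P hP]
    exact Polynomial.monic_normalize i.ne_zero
  · rintro ⟨hm, hi, hd⟩
    rw [UniqueFactorizationMonoid.mem_normalizedFactors_iff' h0]
    exact ⟨hi, hm.normalize_eq_self, hd⟩

lemma E3_bound (hf : Squarefree f) (p : ℕ) [CharP K p] (hp : p.Prime) (hQ' : derivative Q = 0)
    (N m : ℕ) (hN : 0 < N) (hm : m ≤ 2 * (p * N)) (hU : U.natDegree ≤ m)
    (hQm : Q.natDegree + p * N ≤ m) :
    (flt (S K (p * N) ×ˢ S K (p * N)) (fun x =>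
      H f (derivative (U + Q * x.1)) (derivative (Q * x.2)) ≠ 0 ∧
      ∃ P : K[X], P.Monic ∧ Irreducible P ∧ p * N < 2 * P.natDegree ∧ ¬ P ∣ Q ∧
        P ∣ H f (U + Q * x.1) (Q * x.2) ∧
        P ∣ H f (derivative (U + Q * x.1)) (derivative (Q * x.2)))).card * Fintype.card K ^ N ≤
      4 * f.natDegree * f.natDegree * Fintype.card K ^ (2 * (p * N)) := by
  set M := p * N with hMdef
  have hM : 0 < M := Nat.mul_pos hp.pos hN
  have key := prod_bound (S K M) (S K M) (fun a b =>
      H f (derivative (U + Q * a)) (derivative (Q * b)) ≠ 0 ∧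
      ∃ P : K[X], P.Monic ∧ Irreducible P ∧ M < 2 * P.natDegree ∧ ¬ P ∣ Q ∧
        P ∣ H f (U + Q * a) (Q * b) ∧
        P ∣ H f (derivative (U + Q * a)) (derivative (Q * b)))
      (4 * f.natDegree * f.natDegree * ((S K M).image (fun a => derivative a)).card) (by
    intro b hb
    refine le_trans (Finset.card_le_mul_card_image (f := fun a => derivative a) _
      (4 * f.natDegree * f.natDegree) ?_) (Nat.mul_le_mul_left _ (Finset.card_le_card
        (Finset.image_subset_image (flt_subset _ _))))
    intro c hc
    obtain ⟨a0, ha0, rfl⟩ := Finset.mem_image.1 hc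
    have ha0' := mem_flt.1 ha0
    have hder : ∀ a, derivative (U + Q * a) = derivative U + Q * derivative a := by
      intro a; rw [derivative_add, derivative_mul, hQ', zero_mul, zero_add]
    set W := H f (derivative (U + Q * a0)) (derivative (Q * b)) with hW
    have hW0 : W ≠ 0 := ha0'.2.1
    set T := flt (PF W) (fun P => M < 2 * P.natDegree ∧ ¬ P ∣ Q) with hT
    have hnd : ∀ a ∈ S K M, (Q * a).natDegree ≤ m := by
      intro a ha
      by_cases h0 : a = 0
      · simp [h0]
      · have := (mem_S_iff h0).1 ha
        exact natDegree_mul_le.trans (by omega)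
    have hWd : W.natDegree ≤ f.natDegree * m := by
      apply natDegree_H_le
      · refine (natDegree_derivative_le _).trans ((Nat.sub_le _ _).trans ?_)
        exact (natDegree_add_le _ _).trans (max_le hU (hnd _ ha0'.1))
      · exact (natDegree_derivative_le _).trans ((Nat.sub_le _ _).trans (hnd _ hb))
    have hTc : T.card ≤ 4 * f.natDegree := by
      have h1 := card_large_primes W hW0 T (M / 2 + 1) (by
        intro P hP
        have hP := mem_flt.1 hP
        have hP1 := (mem_PF hW0).1 hP.1
        exact ⟨hP1.1, hP1.2.1, hP1.2.2, by omega⟩)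
      have h2 : T.card * M ≤ T.card * (2 * (M / 2 + 1)) := Nat.mul_le_mul_left _ (by omega)
      have h3 : f.natDegree * m ≤ f.natDegree * (2 * M) := Nat.mul_le_mul_left _ hm
      have h4 : T.card * M ≤ 4 * f.natDegree * M := by nlinarith
      exact Nat.le_of_mul_le_mul_right h4 hM
    have hsub : (flt (flt (S K M) (fun a =>
        H f (derivative (U + Q * a)) (derivative (Q * b)) ≠ 0 ∧
      ∃ P : K[X], P.Monic ∧ Irreducible P ∧ M < 2 * P.natDegree ∧ ¬ P ∣ Q ∧
        P ∣ H f (U + Q * a) (Q * b) ∧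
        P ∣ H f (derivative (U + Q * a)) (derivative (Q * b)))) (fun a => derivative a = derivative a0)) ⊆
        T.biUnion (fun P => flt (S K M) (fun a => derivative a = derivative a0 ∧
          P ∣ H f (U + Q * a) (Q * b))) := by
      intro a ha
      simp only [mem_flt, Finset.mem_biUnion] at ha ⊢
      obtain ⟨⟨haS, hne, P, hPm, hPi, hPd, hPQ, h1, h2⟩, hda⟩ := ha
      refine ⟨P, ?_, haS, hda, h1⟩
      rw [hT, mem_flt, mem_PF hW0]
      refine ⟨⟨hPm, hPi, ?_⟩, hPd, hPQ⟩
      rw [hder, hda, ← hder] at h2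
      exact h2
    refine (Finset.card_le_card (fun x hx => hsub (mem_flt.2 (Finset.mem_filter.1 hx)))).trans ((Finset.card_biUnion_le_card_mul _ _ f.natDegree ?_).trans
      (Nat.mul_le_mul_right _ hTc))
    intro P hP
    have hP := mem_flt.1 hP
    have hP1 := (mem_PF hW0).1 hP.1
    refine card_deriv hf.ne_zero (U := U) (Q := Q) (v := Q * b) hP1.2.1 hP.2.2 M hP.2.1 _
      (flt_subset _ _) ?_ ?_
    · intro a ha; exact (mem_flt.1 ha).2.2
    · intro a ha b hb
      exact (mem_flt.1 ha).2.1.trans (mem_flt.1 hb).2.1.symm)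
  rw [card_S] at key
  have him := card_deriv_image (K := K) p hp N
  rw [← hMdef] at him
  calc _ ≤ 4 * f.natDegree * f.natDegree * ((S K M).image (fun a => derivative a)).card
        * Fintype.card K ^ M * Fintype.card K ^ N := Nat.mul_le_mul_right _ key
    _ = 4 * f.natDegree * f.natDegree * Fintype.card K ^ M *
        (Fintype.card K ^ N * ((S K M).image (fun a => derivative a)).card) := by ring
    _ ≤ 4 * f.natDegree * f.natDegree * Fintype.card K ^ M * Fintype.card K ^ M :=
        Nat.mul_le_mul_left _ him
    _ = 4 * f.natDegree * f.natDegree * Fintype.card K ^ (2 * M) := by ring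

lemma E3'_bound (hf : Squarefree f) (p : ℕ) [CharP K p] (hp : p.Prime) (hQ' : derivative Q = 0)
    (hQ : Q ≠ 0) (N : ℕ) :
    (flt (S K (p * N) ×ˢ S K (p * N)) (fun x =>
      H f (derivative (U + Q * x.1)) (derivative (Q * x.2)) = 0)).card ≤
      f.natDegree * Fintype.card K ^ N * Fintype.card K ^ (p * N) := by
  rw [← card_S (K := K) (p * N)]
  refine prod_bound (S K (p * N)) (S K (p * N)) (fun a b =>
      H f (derivative (U + Q * a)) (derivative (Q * b)) = 0) _ ?_
  intro b hb
  have hder : ∀ a, derivative (U + Q * a) = derivative U + Q * derivative a := by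
    intro a; rw [derivative_add, derivative_mul, hQ', zero_mul, zero_add]
  rw [mul_comm f.natDegree]
  refine Finset.card_le_mul_card_image_of_maps_to
    (f := fun a => derivative (U + Q * a)) (t := (hpoly f (derivative (Q * b))).roots.toFinset)
    ?_ _ ?_ |>.trans (Nat.mul_le_mul_left _ ?_)
  · intro a ha
    have ha := (mem_flt.1 ha).2
    have hne : hpoly f (derivative (Q * b)) ≠ 0 := by
      intro h0
      have := leadingCoeff_hpoly f (derivative (Q * b))
      rw [h0, leadingCoeff_zero] at this
      exact (leadingCoeff_ne_zero.2 hf.ne_zero) (by simpa using this.symm)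
    simp only [Finset.mem_coe, Multiset.mem_toFinset]
    rw [mem_roots hne]
    exact ha
  · intro c hc
    by_contra hlt
    obtain ⟨a0, h0⟩ := Finset.card_pos.1 (lt_of_le_of_lt (Nat.zero_le _) (not_le.1 hlt))
    · refine hlt (le_trans (Finset.card_le_card ?_) (card_deriv_fiber p hp N (derivative a0)))
      intro a ha
      simp only [Finset.mem_filter, mem_flt] at ha h0 ⊢
      refine ⟨ha.1.1, ?_⟩
      have h1 := ha.2.trans h0.2.symm
      rw [hder, hder] at h1
      exact mul_left_cancel₀ hQ (add_left_cancel h1)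
  · refine (Multiset.toFinset_card_le _).trans ((card_roots' _).trans ?_)
    rw [natDegree_hpoly]

end SE

namespace SE
open scoped Classical
set_option linter.unusedSectionVars false
set_option linter.unusedVariables false
set_option linter.unusedSimpArgs false
set_option linter.style.haveILetI false
variable {K : Type} [Field K] [Fintype K]
variable {f U Q : K[X]}

/-- degree of the `L`-smooth part (without multiplicity) -/
noncomputable def sm (L : ℕ) (h : K[X]) : ℕ :=
  ∑ k ∈ Finset.Icc 1 L, ∑ P ∈ Irr K k, if P ∣ h then k else 0

lemma sum_sm (hf : f ≠ 0) (hUQ : ∀ P : K[X], Irreducible P → P ∣ Q → ¬ P ∣ U) (M L : ℕ)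
    (hL : L ≤ M) :
    ∑ x ∈ S K M ×ˢ S K M, sm L (H f (U + Q * x.1) (Q * x.2)) ≤
      L * (f.natDegree * Fintype.card K ^ (2 * M)) := by
  set q := Fintype.card K with hqdef
  simp only [sm]
  rw [Finset.sum_comm]
  have : L * (f.natDegree * q ^ (2 * M)) =
      ∑ k ∈ Finset.Icc 1 L, f.natDegree * q ^ (2 * M) := by simp
  rw [this]
  refine Finset.sum_le_sum fun k hk => ?_
  have hk := Finset.mem_Icc.1 hk
  rw [Finset.sum_comm]
  calc _ ≤ ∑ P ∈ Irr K k, k * (q ^ (M - k) * f.natDegree * q ^ M) := by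
        refine Finset.sum_le_sum fun P hP => ?_
        obtain ⟨hm, hi, hk'⟩ := mem_Irr.1 hP
        rw [← Finset.sum_filter, Finset.sum_const, smul_eq_mul, mul_comm]
        refine Nat.mul_le_mul_left _ ?_
        have h1 : (flt (S K M ×ˢ S K M) (fun x => P ∣ H f (U + Q * x.1) (Q * x.2))).card ≤
            q ^ (M - k) * f.natDegree * q ^ M := by
          rw [hqdef, ← card_S (K := K) M, ← hqdef]
          refine prod_bound (S K M) (S K M) (fun a b => P ∣ H f (U + Q * a) (Q * b)) _ ?_
          intro b hb
          by_cases hPQ : P ∣ Q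
          · have : flt (S K M) (fun a => P ∣ H f (U + Q * a) (Q * b)) = ∅ := by
              refine Finset.eq_empty_of_forall_notMem fun a ha => ?_
              have h2 := dvd_u_of_dvd_v hf hi (hPQ.mul_right b) (mem_flt.1 ha).2
              exact hUQ P hi hPQ ((dvd_add_left (hPQ.mul_right a)).1 h2)
            rw [this]; simp
          · have := card_one hf (U := U) (v := Q * b) hi hPQ M
            rwa [hk'] at this
        refine le_trans (Finset.card_le_card ?_) h1
        intro x hx
        exact mem_flt.2 (Finset.mem_filter.1 hx)
    _ = (k * (Irr K k).card) * (q ^ (M - k) * f.natDegree * q ^ M) := by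
        rw [Finset.sum_const, smul_eq_mul]; ring
    _ ≤ q ^ k * (q ^ (M - k) * f.natDegree * q ^ M) :=
        Nat.mul_le_mul_right _ (card_Irr k (by omega))
    _ = f.natDegree * q ^ (2 * M) := by
        have : q ^ k * q ^ (M - k) = q ^ M := by rw [← pow_add]; congr 1; omega
        calc _ = f.natDegree * ((q ^ k * q ^ (M - k)) * q ^ M) := by ring
          _ = _ := by rw [this]; ring

lemma E4_bound (hf : f ≠ 0) (hUQ : ∀ P : K[X], Irreducible P → P ∣ Q → ¬ P ∣ U) (M m : ℕ)
    (hm : M ≤ m) (hm0 : 0 < m) (hd : 0 < f.natDegree) :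
    8 * (flt (S K M ×ˢ S K M) (fun x =>
      m < sm (M / (8 * f.natDegree)) (H f (U + Q * x.1) (Q * x.2)))).card ≤
      Fintype.card K ^ (2 * M) := by
  set L := M / (8 * f.natDegree) with hL
  set E := flt (S K M ×ˢ S K M) (fun x => m < sm L (H f (U + Q * x.1) (Q * x.2)))
  have h1 : E.card * m ≤ L * (f.natDegree * Fintype.card K ^ (2 * M)) := by
    refine le_trans ?_ (sum_sm hf hUQ M L (Nat.div_le_self _ _))
    rw [← smul_eq_mul]
    refine le_trans (Finset.card_nsmul_le_sum E _ m (fun x hx => (mem_flt.1 hx).2.le)) ?_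
    exact Finset.sum_le_sum_of_subset (flt_subset _ _)
  have h2 : L * (8 * f.natDegree) ≤ m := (Nat.div_mul_le_self _ _).trans hm
  have h3 : 8 * E.card * m ≤ Fintype.card K ^ (2 * M) * m := by
    calc 8 * E.card * m = 8 * (E.card * m) := by ring
      _ ≤ 8 * (L * (f.natDegree * Fintype.card K ^ (2 * M))) := Nat.mul_le_mul_left _ h1
      _ = Fintype.card K ^ (2 * M) * (L * (8 * f.natDegree)) := by ring
      _ ≤ _ := Nat.mul_le_mul_left _ h2
  exact Nat.le_of_mul_le_mul_right h3 hm0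

lemma exists_Q (p : ℕ) [CharP K p] (hp : p.Prime) (k0 : ℕ) :
    ∃ Q : K[X], Q.Monic ∧ derivative Q = 0 ∧
      ∀ P : K[X], P.Monic → Irreducible P → P.natDegree ≤ k0 → P ∣ Q := by
  refine ⟨(∏ P ∈ (Finset.Icc 1 k0).biUnion (fun k => Irr K k), P) ^ p, ?_, ?_, ?_⟩
  · refine Monic.pow (monic_prod_of_monic _ _ ?_) _
    intro P hP
    obtain ⟨k, hk, hP⟩ := Finset.mem_biUnion.1 hP
    exact (mem_Irr.1 hP).1
  · rw [derivative_pow]; simp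
  · intro P hm hi hk
    refine dvd_pow (Finset.dvd_prod_of_mem (fun P => P) ?_) hp.ne_zero
    rw [Finset.mem_biUnion]
    exact ⟨P.natDegree, Finset.mem_Icc.2 ⟨hi.natDegree_pos, hk⟩, mem_Irr.2 ⟨hm, hi, rfl⟩⟩

lemma cover (hf : Squarefree f) (hd : 2 ≤ f.natDegree) (M s k0 : ℕ) (hQm : Q.Monic) (hM : 0 < M)
    (hQk : ∀ P : K[X], P.Monic → Irreducible P → P.natDegree ≤ k0 → P ∣ Q)
    (hUQ : ∀ P : K[X], Irreducible P → P ∣ Q → ¬ P ∣ U)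
    (hub : ∀ a ∈ S K M, (U + Q * a).Monic ∧ (U + Q * a).natDegree = M + s)
    (hvb : ∀ b ∈ S K M, (Q * b).degree < (M + s : ℕ)) (x : K[X] × K[X])
    (hx : x ∈ S K M ×ˢ S K M) (hx0 : x.2 ≠ 0)
    (hns : ¬ Squarefree (H f (U + Q * x.1) (Q * x.2))) :
    (∃ k ∈ Finset.Ico (k0 + 1) M, ∃ P ∈ Irr K k, (¬ P ∣ Q ∧ P ∣ U + Q * x.1 ∧ P ∣ x.2)) ∨
    (∃ k ∈ Finset.Ico (k0 + 1) (M / 2 + 1), ∃ P ∈ Irr K k,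
      (¬ P ∣ Q ∧ ¬ P ∣ Q * x.2 ∧ P ^ 2 ∣ H f (U + Q * x.1) (Q * x.2))) ∨
    (H f (derivative (U + Q * x.1)) (derivative (Q * x.2)) ≠ 0 ∧
      ∃ P : K[X], P.Monic ∧ Irreducible P ∧ M < 2 * P.natDegree ∧ ¬ P ∣ Q ∧
        P ∣ H f (U + Q * x.1) (Q * x.2) ∧
        P ∣ H f (derivative (U + Q * x.1)) (derivative (Q * x.2))) ∨
    H f (derivative (U + Q * x.1)) (derivative (Q * x.2)) = 0 := by
  obtain ⟨ha, hb⟩ := Finset.mem_product.1 hx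
  obtain ⟨hum, hud⟩ := hub _ ha
  have hvd := hvb _ hb
  have hlt : (Q * x.2).degree < (U + Q * x.1).degree := by
    rw [degree_eq_natDegree hum.ne_zero, hud]; exact hvd
  have hdH := natDegree_H f _ _ hf.ne_zero hum.ne_zero hlt
  have hH0 : H f (U + Q * x.1) (Q * x.2) ≠ 0 := by
    intro h
    rw [h, natDegree_zero, hud] at hdH
    have : 0 < f.natDegree * (M + s) := by positivity
    omega
  rw [squarefree_iff_no_irreducibles hH0] at hns
  push Not at hns
  obtain ⟨P0, hP0, hPP0⟩ := hns
  set P := normalize P0 with hPdef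
  have hPa : Associated P P0 := normalize_associated P0
  have hPi : Irreducible P := hPa.symm.irreducible hP0
  have hPm : P.Monic := monic_normalize hP0.ne_zero
  have hP2 : P ^ 2 ∣ H f (U + Q * x.1) (Q * x.2) := by
    rw [pow_two]
    exact ((hPa.mul_mul hPa).dvd).trans hPP0
  have hP1 : P ∣ H f (U + Q * x.1) (Q * x.2) := (dvd_pow_self P two_ne_zero).trans hP2
  have hPQ : ¬ P ∣ Q := by
    intro h
    have h2 := dvd_u_of_dvd_v hf.ne_zero hPi (h.mul_right x.2) hP1
    exact hUQ P hPi h ((dvd_add_left (h.mul_right x.1)).1 h2)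
  have hPk : k0 < P.natDegree := by
    by_contra h
    exact hPQ (hQk P hPm hPi (by omega))
  by_cases hPv : P ∣ Q * x.2
  · left
    have h2 := dvd_u_of_dvd_v hf.ne_zero hPi hPv hP1
    have h3 := (hPi.prime.dvd_or_dvd hPv).resolve_left hPQ
    have h4 := natDegree_le_of_dvd h3 hx0
    have h5 := (mem_S_iff hx0).1 hb
    exact ⟨P.natDegree, Finset.mem_Ico.2 ⟨by omega, by omega⟩, P, mem_Irr.2 ⟨hPm, hPi, rfl⟩,
      hPQ, h2, h3⟩
  by_cases hPM : 2 * P.natDegree ≤ M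
  · right; left
    exact ⟨P.natDegree, Finset.mem_Ico.2 ⟨by omega, by omega⟩, P, mem_Irr.2 ⟨hPm, hPi, rfl⟩,
      hPQ, hPv, hP2⟩
  by_cases h0 : H f (derivative (U + Q * x.1)) (derivative (Q * x.2)) = 0
  · exact Or.inr (Or.inr (Or.inr h0))
  · right; right; left
    exact ⟨h0, P, hPm, hPi, by omega, hPQ, hP1, dvd_H_deriv hf (by omega) hPi hPv hP2⟩

lemma card_cover7 {α : Type} (A B0 B1 B2 B3 B4 B5 B6 : Finset α)
    (h : ∀ x ∈ A, x ∈ B0 ∨ x ∈ B1 ∨ x ∈ B2 ∨ x ∈ B3 ∨ x ∈ B4 ∨ x ∈ B5 ∨ x ∈ B6) :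
    A.card ≤ B0.card + (B1.card + (B2.card + (B3.card + (B4.card + (B5.card + B6.card))))) := by
  have hs : A ⊆ B0 ∪ (B1 ∪ (B2 ∪ (B3 ∪ (B4 ∪ (B5 ∪ B6))))) := by
    intro x hx
    simpa only [Finset.mem_union] using h x hx
  refine (Finset.card_le_card hs).trans ?_
  refine (Finset.card_union_le _ _).trans (Nat.add_le_add_left ?_ _)
  refine (Finset.card_union_le _ _).trans (Nat.add_le_add_left ?_ _)
  refine (Finset.card_union_le _ _).trans (Nat.add_le_add_left ?_ _)
  refine (Finset.card_union_le _ _).trans (Nat.add_le_add_left ?_ _)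
  refine (Finset.card_union_le _ _).trans (Nat.add_le_add_left ?_ _)
  exact (Finset.card_union_le _ _)

lemma count_arith (q d N M k0 g e0 e1 e2 e3 e3' e4 : ℕ) (hq : 2 ≤ q) (hk0 : k0 = 8 * (d + 1))
    (hN : 32 * d ^ 2 + 1 ≤ N) (hd : 2 ≤ d)
    (hNM : 2 * N ≤ M)
    (hc : q ^ (2 * M) ≤ g + (e0 + (e1 + (e2 + (e3 + (e3' + e4))))))
    (b0 : e0 ≤ q ^ M) (b1 : (e1 : ℝ) ≤ (q : ℝ) ^ (2 * M) * ((q : ℝ)⁻¹) ^ k0)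
    (b2 : (e2 : ℝ) ≤ d * (q : ℝ) ^ (2 * M) * ((q : ℝ)⁻¹) ^ k0)
    (b3 : e3 * q ^ N ≤ 4 * d * d * q ^ (2 * M))
    (b3' : e3' ≤ d * q ^ N * q ^ M)
    (b4 : 8 * e4 ≤ q ^ (2 * M)) : q ^ (2 * M) ≤ 4 * g := by
  have hqN : 32 * d ^ 2 + 1 ≤ q ^ N :=
    hN.trans ((Nat.lt_two_pow_self).le.trans (Nat.pow_le_pow_left hq N))
  have hqk : k0 ≤ q ^ k0 := (Nat.lt_two_pow_self).le.trans (Nat.pow_le_pow_left hq k0)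
  have hT : q ^ (2 * M) = q ^ (M - N) * q ^ N * q ^ M := by
    rw [← pow_add, ← pow_add]; congr 1; omega
  have hNN : q ^ N ≤ q ^ (M - N) := Nat.pow_le_pow_right (by omega) (by omega)
  have e12 : (8 * (e1 + e2) : ℝ) ≤ (q : ℝ) ^ (2 * M) := by
    have hk : (0 : ℝ) < (q : ℝ) ^ k0 := by positivity
    have hqk' : (8 * (d + 1) : ℝ) ≤ (q : ℝ) ^ k0 := by rw [hk0] at hqk ⊢; exact_mod_cast hqk
    have h1 : (8 * (d + 1) : ℝ) * ((q : ℝ)⁻¹) ^ k0 ≤ 1 := by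
      rw [inv_pow, ← div_eq_mul_inv, div_le_one hk]; exact hqk'
    have h2 : (0 : ℝ) ≤ (q : ℝ) ^ (2 * M) := by positivity
    have h3 := mul_le_mul_of_nonneg_left h1 h2
    nlinarith
  have e12' : 8 * (e1 + e2) ≤ q ^ (2 * M) := by exact_mod_cast e12
  have hd2 : d ≤ d ^ 2 := by nlinarith
  have e3b : 8 * e3 ≤ q ^ (2 * M) := by
    have h1 : 8 * e3 * (32 * d ^ 2) ≤ q ^ (2 * M) * (32 * d ^ 2) := by
      calc 8 * e3 * (32 * d ^ 2) ≤ 8 * e3 * q ^ N := Nat.mul_le_mul_left _ (by omega)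
        _ = 8 * (e3 * q ^ N) := by ring
        _ ≤ 8 * (4 * d * d * q ^ (2 * M)) := Nat.mul_le_mul_left _ b3
        _ = _ := by ring
    exact Nat.le_of_mul_le_mul_right h1 (by positivity)
  have e3b' : 8 * e3' ≤ q ^ (2 * M) := by
    calc 8 * e3' ≤ 8 * (d * q ^ N * q ^ M) := Nat.mul_le_mul_left _ b3'
      _ = (8 * d) * q ^ N * q ^ M := by ring
      _ ≤ q ^ (M - N) * q ^ N * q ^ M := by
        refine Nat.mul_le_mul_right _ (Nat.mul_le_mul_right _ ?_)
        omega
      _ = _ := hT.symm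
  have e0b : 8 * e0 ≤ q ^ (2 * M) := by
    rw [hT]
    calc 8 * e0 ≤ 8 * q ^ M := Nat.mul_le_mul_left _ b0
      _ ≤ (q ^ (M - N) * q ^ N) * q ^ M := by
        refine Nat.mul_le_mul_right _ ?_
        nlinarith
  omega

theorem sieve (hf : Squarefree f) (hd : 2 ≤ f.natDegree) (p : ℕ) [CharP K p] (hp : p.Prime) :
    ∃ s N0 : ℕ, ∀ N, N0 ≤ N → ∃ G : Finset (K[X] × K[X]),
      Fintype.card K ^ (2 * (p * N)) ≤ 4 * G.card ∧ s ≤ p * N ∧ 0 < p * N ∧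
      ∀ x ∈ G, x.1.Monic ∧ x.1.natDegree = p * N + s ∧ x.2.degree < (p * N + s : ℕ) ∧
        Squarefree (H f x.1 x.2) ∧
        sm (p * N / (8 * f.natDegree)) (H f x.1 x.2) ≤ p * N + s := by
  set d := f.natDegree with hddef
  set q := Fintype.card K with hqdef
  have hq : 2 ≤ q := Fintype.one_lt_card
  have hq2 : (2 : ℝ) ≤ q := by exact_mod_cast hq
  have hf0 := hf.ne_zero
  set k0 := 8 * (d + 1) with hk0
  obtain ⟨Q, hQm, hQ', hQk⟩ := exists_Q (K := K) p hp k0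
  set s := Q.natDegree with hs
  refine ⟨s, 32 * d ^ 2 + s + 1, ?_⟩
  intro N hN
  set M := p * N with hM
  have hNM : 2 * N ≤ M := Nat.mul_le_mul_right _ hp.two_le
  have hM0 : 0 < M := by omega
  have hsM : s ≤ M := by nlinarith
  set U : K[X] := 1 + Q * X ^ M with hU
  have hUQ : ∀ P : K[X], Irreducible P → P ∣ Q → ¬ P ∣ U := by
    intro P hP hPQ hPU
    exact hP.not_isUnit (isUnit_of_dvd_one ((dvd_add_left (hPQ.mul_right _)).1 hPU))
  have hub : ∀ a ∈ S K M, (U + Q * a).Monic ∧ (U + Q * a).natDegree = M + s := by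
    intro a ha
    have e : U + Q * a = 1 + Q * (X ^ M + a) := by rw [hU]; ring
    have hmon : (X ^ M + a).Monic := monic_X_pow_add (mem_S.1 ha)
    have hdeg : (X ^ M + a).natDegree = M := by
      rw [natDegree_add_eq_left_of_degree_lt, natDegree_X_pow]
      rw [degree_X_pow]; exact mem_S.1 ha
    have hmm := hQm.mul hmon
    have hnd : (Q * (X ^ M + a)).natDegree = M + s := by
      rw [hQm.natDegree_mul hmon, hdeg, add_comm]
    have hlt : (1 : K[X]).degree < (Q * (X ^ M + a)).degree := by
      rw [degree_one, degree_eq_natDegree hmm.ne_zero, hnd]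
      exact_mod_cast (by omega : 0 < M + s)
    rw [e]
    refine ⟨hmm.add_of_right hlt, ?_⟩
    rw [natDegree_add_eq_right_of_degree_lt hlt, hnd]
  have hvb : ∀ b ∈ S K M, (Q * b).degree < (M + s : ℕ) := by
    intro b hb
    by_cases h0 : b = 0
    · rw [h0, mul_zero, degree_zero]; exact WithBot.bot_lt_coe _
    · have h1 := (mem_S_iff h0).1 hb
      rw [degree_eq_natDegree (mul_ne_zero hQm.ne_zero h0), natDegree_mul hQm.ne_zero h0]
      exact_mod_cast (by omega : Q.natDegree + b.natDegree < M + s)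
  have hUd : U.natDegree ≤ M + s := by
    have := (hub 0 (by rw [mem_S, degree_zero]; exact WithBot.bot_lt_coe _)).2
    rw [mul_zero, add_zero] at this
    exact this.le
  set A := S K M ×ˢ S K M with hA
  set G0 := flt A (fun x => Squarefree (H f (U + Q * x.1) (Q * x.2)) ∧
    sm (M / (8 * d)) (H f (U + Q * x.1) (Q * x.2)) ≤ M + s) with hG0
  refine ⟨G0.image (fun x => (U + Q * x.1, Q * x.2)), ?_, hsM, hM0, ?_⟩
  swap
  · intro y hy
    obtain ⟨x, hx, rfl⟩ := Finset.mem_image.1 hy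
    obtain ⟨hxA, h1, h2⟩ := mem_flt.1 hx
    obtain ⟨ha, hb⟩ := Finset.mem_product.1 hxA
    exact ⟨(hub _ ha).1, (hub _ ha).2, hvb _ hb, h1, h2⟩
  rw [Finset.card_image_of_injective]
  swap
  · rintro ⟨a, b⟩ ⟨a', b'⟩ h
    simp only [Prod.mk.injEq, add_right_inj] at h
    exact Prod.ext (mul_left_cancel₀ hQm.ne_zero h.1) (mul_left_cancel₀ hQm.ne_zero h.2)
  -- the exceptional sets
  have b1 := E1_bound (K := K) (U := U) (Q := Q) M k0
  have b2 := E2_bound (K := K) (U := U) (Q := Q) hf M k0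
  have b3 := E3_bound (K := K) (U := U) (Q := Q) hf p hp hQ' N (M + s) (by omega) (by omega) hUd
    (by omega)
  have b3' := E3'_bound (K := K) (U := U) (Q := Q) hf p hp hQ' hQm.ne_zero N
  have b4 := E4_bound (K := K) hf0 hUQ M (M + s) (by omega) (by omega) (by omega)
  have b0 : (flt A (fun x => x.2 = 0)).card ≤ q ^ M := by
    rw [hqdef, ← card_S]
    refine Finset.card_le_card_of_injOn Prod.fst ?_ ?_
    · intro x hx
      exact (Finset.mem_product.1 (mem_flt.1 hx).1).1
    · intro x hx y hy hxy
      have hx := (mem_flt.1 hx).2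
      have hy := (mem_flt.1 hy).2
      exact Prod.ext hxy (hx.trans hy.symm)
  refine count_arith q d N M k0 _ _ _ _ _ _ _ hq hk0 (by omega) hd hNM ?_ b0 b1 b2 b3 b3' b4
  have hcA : A.card = q ^ (2 * M) := by
    rw [hA, Finset.card_product, card_S, ← pow_add]; congr 1; ring
  rw [← hcA]
  refine card_cover7 A _ _ _ _ _ _ _ ?_
  intro x hx
  by_cases h0 : x.2 = 0
  · exact Or.inr (Or.inl (mem_flt.2 ⟨hx, h0⟩))
  by_cases h4 : M + s < sm (M / (8 * f.natDegree)) (H f (U + Q * x.1) (Q * x.2))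
  · exact Or.inr (Or.inr (Or.inr (Or.inr (Or.inr (Or.inr (mem_flt.2 ⟨hx, h4⟩))))))
  by_cases h5 : Squarefree (H f (U + Q * x.1) (Q * x.2))
  · exact Or.inl (mem_flt.2 ⟨hx, h5, not_lt.1 h4⟩)
  rcases cover hf hd M s k0 hQm hM0 hQk hUQ hub hvb x hx h0 h5 with h | h | h | h
  · exact Or.inr (Or.inr (Or.inl (mem_flt.2 ⟨hx, h⟩)))
  · exact Or.inr (Or.inr (Or.inr (Or.inl (mem_flt.2 ⟨hx, h⟩))))
  · exact Or.inr (Or.inr (Or.inr (Or.inr (Or.inl (mem_flt.2 ⟨hx, h⟩)))))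
  · exact Or.inr (Or.inr (Or.inr (Or.inr (Or.inr (Or.inl (mem_flt.2 ⟨hx, h⟩))))))

end SE

namespace SE
open scoped Classical
set_option linter.unusedSectionVars false
set_option linter.unusedVariables false
set_option linter.unusedSimpArgs false
set_option linter.style.haveILetI false
variable {K : Type} [Field K] [Fintype K]
variable {f U Q : K[X]}

lemma small_le_sm (h : K[X]) (h0 : h ≠ 0) (L : ℕ) :
    ∑ P ∈ (PF h).filter (fun P => ¬ L < P.natDegree), P.natDegree ≤ sm L h := by
  rw [sm, ← Finset.sum_fiberwise_of_maps_to (t := Finset.Icc 1 L) (g := fun P => P.natDegree)]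
  · refine Finset.sum_le_sum fun k hk => ?_
    rw [← Finset.sum_filter]
    have : ∑ P ∈ ((PF h).filter (fun P => ¬ L < P.natDegree)).filter (fun P => P.natDegree = k),
        P.natDegree = ∑ P ∈ ((PF h).filter (fun P => ¬ L < P.natDegree)).filter
          (fun P => P.natDegree = k), k :=
      Finset.sum_congr rfl fun P hP => (Finset.mem_filter.1 hP).2
    rw [this]
    refine Finset.sum_le_sum_of_subset ?_
    intro P hP
    simp only [Finset.mem_filter] at hP ⊢
    obtain ⟨h1, h2, h3⟩ := (mem_PF h0).1 hP.1.1
    exact ⟨mem_Irr.2 ⟨h1, h2, hP.2⟩, h3⟩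
  · intro P hP
    obtain ⟨hP, hL⟩ := Finset.mem_filter.1 hP
    obtain ⟨h1, h2, h3⟩ := (mem_PF h0).1 hP
    exact Finset.mem_Icc.2 ⟨h2.natDegree_pos, by omega⟩

lemma natDegree_eq_sum_PF (h : K[X]) (hs : Squarefree h) :
    h.natDegree ≤ ∑ P ∈ PF h, P.natDegree := by
  have h0 := hs.ne_zero
  have hn := (UniqueFactorizationMonoid.squarefree_iff_nodup_normalizedFactors h0).1 hs
  have h1 : ∏ P ∈ PF h, P = (UniqueFactorizationMonoid.normalizedFactors h).prod := by
    rw [Finset.prod_eq_multiset_prod, PF, Multiset.toFinset_val, Multiset.dedup_eq_self.2 hn,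
      Multiset.map_id']
  have h2 := UniqueFactorizationMonoid.prod_normalizedFactors h0
  rw [← h1] at h2
  rw [← natDegree_prod_of_monic _ _ (fun P hP => ((mem_PF h0).1 hP).1)]
  refine natDegree_le_of_dvd h2.symm.dvd ?_
  exact fun h => h0 ((h2.eq_zero_iff).1 h)

lemma coprime_of_sq {u v : K[X]} (hd : 2 ≤ f.natDegree) (hs : Squarefree (H f u v)) :
    IsCoprime u v := by
  have key : ∀ P : K[X], P ∣ u → P ∣ v → P * P ∣ H f u v := by
    rintro P ⟨a, rfl⟩ ⟨b, rfl⟩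
    rw [H_eq_sum]
    refine Finset.dvd_sum fun j hj => ?_
    have hj := Finset.mem_range.1 hj
    have e : C (f.coeff j) * (P * a) ^ j * (P * b) ^ (f.natDegree - j) =
        P ^ f.natDegree * (C (f.coeff j) * a ^ j * b ^ (f.natDegree - j)) := by
      have : P ^ f.natDegree = P ^ j * P ^ (f.natDegree - j) := by
        rw [← pow_add]; congr 1; omega
      rw [this, mul_pow, mul_pow]; ring
    rw [e, ← pow_two]
    exact (pow_dvd_pow P hd).mul_right _
  refine isCoprime_of_irreducible_dvd ?_ ?_
  · rintro ⟨rfl, rfl⟩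
    have := key 0 dvd_rfl dvd_rfl
    rw [zero_mul] at this
    exact hs.ne_zero (zero_dvd_iff.1 this)
  · intro P hP hu hv
    exact hP.not_isUnit (hs P (key P hu hv))

lemma fiber_card (hf : Squarefree f) (hd : 3 ≤ f.natDegree) (M m : ℕ) (hm : 0 < m)
    (hmM : m ≤ 2 * M) (h : K[X]) (hs : Squarefree h) (hsm : sm (M / (8 * f.natDegree)) h ≤ m)
    (T : Finset (K[X] × K[X]))
    (hT : ∀ x ∈ T, x.1.Monic ∧ x.1.natDegree = m ∧ x.2.degree < (m : ℕ) ∧ H f x.1 x.2 = h) :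
    T.card ≤ f.natDegree ^ (16 * f.natDegree ^ 2) := by
  set d := f.natDegree with hdd
  rcases T.eq_empty_or_nonempty with hemp | ⟨x0, hx0⟩
  · simp [hemp]
  have h0 := hs.ne_zero
  have hdeg : h.natDegree = d * m := by
    obtain ⟨a, b, c, e⟩ := hT x0 hx0
    rw [← e, natDegree_H f _ _ hf.ne_zero a.ne_zero, b]
    rw [degree_eq_natDegree a.ne_zero, b]; exact c
  set L := M / (8 * d) with hL
  set PP := (PF h).filter (fun P => L < P.natDegree) with hPP
  have hPPm : ∀ P ∈ PP, P.Monic ∧ Irreducible P ∧ P ∣ h ∧ L + 1 ≤ P.natDegree := by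
    intro P hP
    obtain ⟨h1, h2⟩ := Finset.mem_filter.1 hP
    obtain ⟨a, b, c⟩ := (mem_PF h0).1 h1
    exact ⟨a, b, c, h2⟩
  have hcard : PP.card ≤ 16 * d ^ 2 := by
    have h1 := card_large_primes h h0 PP (L + 1) hPPm
    have h2 : M < (L + 1) * (8 * d) := by
      have h5 := Nat.lt_mul_div_succ M (show 0 < 8 * d by omega)
      rw [← hL] at h5
      rw [mul_comm]; exact h5
    rw [hdeg] at h1
    have h3 : PP.card * (L + 1) ≤ (16 * d ^ 2) * (L + 1) := by nlinarith
    exact Nat.le_of_mul_le_mul_right h3 (Nat.succ_pos L)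
  have hbig : 2 * m ≤ (∏ P ∈ PP, P).natDegree := by
    rw [natDegree_prod_of_monic _ _ (fun P hP => (hPPm P hP).1)]
    have h1 := natDegree_eq_sum_PF h hs
    have h2 := small_le_sm h h0 L
    have h3 := Finset.sum_filter_add_sum_filter_not (PF h) (fun P => L < P.natDegree)
      (fun P => P.natDegree)
    rw [hdeg] at h1
    rw [← hPP] at h3
    have h4 : 3 * m ≤ d * m := Nat.mul_le_mul_right _ hd
    omega
  have hg : ∀ (P : K[X]) (x : K[X] × K[X]), ∃ g : K[X], P ∈ PP → x ∈ T →
      P ∣ x.1 - g * x.2 ∧ P ∣ f.comp g := by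
    intro P x
    by_cases hP : P ∈ PP
    swap
    · exact ⟨0, fun h => absurd h hP⟩
    by_cases hx : x ∈ T
    swap
    · exact ⟨0, fun _ h => absurd h hx⟩
    obtain ⟨a, b, c, e⟩ := hT x hx
    obtain ⟨hPm, hPi, hPh, _⟩ := hPPm P hP
    have hPH : P ∣ H f x.1 x.2 := e ▸ hPh
    have hcop : IsCoprime x.1 x.2 := coprime_of_sq (by omega) (e ▸ hs)
    have hv : ¬ P ∣ x.2 := by
      intro hv
      have hu := dvd_u_of_dvd_v hf.ne_zero hPi hv hPH
      exact hPi.not_isUnit (hcop.isUnit_of_dvd' hu hv)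
    obtain ⟨g, hg⟩ := exists_g hPi hv 1 (by rwa [pow_one])
    rw [pow_one] at hg
    exact ⟨g, fun _ _ => hg⟩
  choose g hg using hg
  have hcl : ∀ P ∈ PP, ((T.image (g P)).image (fun x => x % P)).card ≤ d := by
    intro P hP
    have := card_root_classes P (hPPm P hP).2.1 (f.map C) f.leadingCoeff
      (leadingCoeff_ne_zero.2 hf.ne_zero) (leadingCoeff_map_of_injective C_injective f)
      (T.image (g P)) (by
        intro y hy
        obtain ⟨x, hx, rfl⟩ := Finset.mem_image.1 hy
        rw [eval_map]
        exact (hg P x hP hx).2)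
    rwa [natDegree_map_eq_of_injective C_injective] at this
  calc T.card ≤ (PP.pi (fun P => (T.image (g P)).image (fun x => x % P))).card := by
        refine Finset.card_le_card_of_injOn (fun x P _ => g P x % P) ?_ ?_
        · intro x hx
          simp only [Finset.mem_coe, Finset.mem_pi]
          intro P hP
          exact Finset.mem_image_of_mem _ (Finset.mem_image_of_mem _ hx)
        · intro x hx y hy hxy
          have hW : ∏ P ∈ PP, P ∣ x.1 * y.2 - y.1 * x.2 := by
            apply Finset.prod_dvd_of_coprime
            · intro P hP R hR hne
              exact irr_coprime (hPPm P hP).1 (hPPm R hR).1 (hPPm P hP).2.1 (hPPm R hR).2.1 hne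
            · intro P hP
              have h1 : g P x % P = g P y % P := congrFun (congrFun hxy P) hP
              have h2 := mod_eq_iff.1 h1
              have e : x.1 * y.2 - y.1 * x.2 = (x.1 - g P x * x.2) * y.2 -
                (y.1 - g P y * y.2) * x.2 + (g P x - g P y) * (x.2 * y.2) := by ring
              rw [e]
              exact dvd_add (dvd_sub ((hg P x hP hx).1.mul_right _) ((hg P y hP hy).1.mul_right _))
                (h2.mul_right _)
          obtain ⟨xa, xb, xc, xe⟩ := hT x hx
          obtain ⟨ya, yb, yc, ye⟩ := hT y hy
          have hW0 : x.1 * y.2 - y.1 * x.2 = 0 := by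
            by_contra hne
            have h3 := natDegree_le_of_dvd hW hne
            have h4 : (x.1 * y.2 - y.1 * x.2).degree < (2 * m : ℕ) := by
              have aux : ∀ a b : K[X], a.Monic → a.natDegree = m → b.degree < (m : ℕ) →
                  (a * b).degree < (2 * m : ℕ) := by
                intro a b ha hb hc
                by_cases hb0 : b = 0
                · rw [hb0, mul_zero, degree_zero]; exact WithBot.bot_lt_coe _
                · rw [degree_eq_natDegree hb0] at hc
                  have hc : b.natDegree < m := by exact_mod_cast hc
                  rw [degree_eq_natDegree (mul_ne_zero ha.ne_zero hb0),
                    natDegree_mul ha.ne_zero hb0]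
                  exact_mod_cast (by omega : a.natDegree + b.natDegree < 2 * m)
              exact lt_of_le_of_lt (degree_sub_le _ _)
                (max_lt (aux _ _ xa xb yc) (aux _ _ ya yb xc))
            rw [degree_eq_natDegree hne] at h4
            have h4 : (x.1 * y.2 - y.1 * x.2).natDegree < 2 * m := by exact_mod_cast h4
            omega
          have hW1 : x.1 * y.2 = y.1 * x.2 := sub_eq_zero.1 hW0
          have hcop : IsCoprime x.1 x.2 := coprime_of_sq (by omega) (xe ▸ hs)
          have hdv : x.1 ∣ y.1 := hcop.dvd_of_dvd_mul_right ⟨y.2, hW1.symm⟩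
          have h1 : x.1 = y.1 :=
            (eq_of_monic_of_dvd_of_natDegree_le xa ya hdv (by omega)).symm
          refine Prod.ext h1 ?_
          rw [← h1] at hW1
          exact (mul_left_cancel₀ xa.ne_zero hW1).symm
    _ = ∏ P ∈ PP, ((T.image (g P)).image (fun x => x % P)).card := Finset.card_pi _ _
    _ ≤ ∏ P ∈ PP, d := Finset.prod_le_prod' hcl
    _ = d ^ PP.card := Finset.prod_const _
    _ ≤ d ^ (16 * d ^ 2) := Nat.pow_le_pow_right (by omega) hcard

end SE

namespace SE
open scoped Classical
set_option linter.unusedSectionVars false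
set_option linter.unusedVariables false
set_option linter.unusedSimpArgs false
set_option linter.style.haveILetI false
variable {K : Type} [Field K] [Fintype K]
variable {f U Q : K[X]}

lemma H_lin (f u v : K[X]) (h : f.natDegree = 1) :
    H f u v = C (f.coeff 1) * u + C (f.coeff 0) * v := by
  rw [H_eq_sum, h]
  simp [Finset.sum_range_succ]
  ring

lemma lin_inj (g h u v u' v' : K[X]) (hg : g.natDegree = 1) (hh : h.natDegree = 1)
    (hc : IsCoprime g h) (e1 : H g u v = H g u' v') (e2 : H h u v = H h u' v') :
    u = u' ∧ v = v' := by
  rw [H_lin _ _ _ hg, H_lin _ _ _ hg] at e1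
  rw [H_lin _ _ _ hh, H_lin _ _ _ hh] at e2
  have hg1 : g.coeff 1 ≠ 0 := by
    rw [← hg, coeff_natDegree, leadingCoeff_ne_zero]
    rintro rfl; simp at hg
  have hdet : g.coeff 1 * h.coeff 0 - g.coeff 0 * h.coeff 1 ≠ 0 := by
    intro h0
    have eg := eq_X_add_C_of_natDegree_le_one hg.le
    have eh := eq_X_add_C_of_natDegree_le_one hh.le
    have key : g * C (h.coeff 1) = h * C (g.coeff 1) := by
      have h0' : C (g.coeff 1) * C (h.coeff 0) - C (g.coeff 0) * C (h.coeff 1) = 0 := by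
        rw [← C_mul, ← C_mul, ← C_sub, h0, C_0]
      generalize g.coeff 1 = a1 at *
      generalize g.coeff 0 = a0 at *
      generalize h.coeff 1 = b1 at *
      generalize h.coeff 0 = b0 at *
      rw [eg, eh]
      linear_combination -h0'
    have hdv : g ∣ C (g.coeff 1) := hc.dvd_of_dvd_mul_left ⟨_, key.symm⟩
    have hu : IsUnit g := isUnit_of_dvd_unit hdv (isUnit_C.2 hg1.isUnit)
    have := natDegree_eq_zero_of_isUnit hu
    omega
  have hC : C (g.coeff 1 * h.coeff 0 - g.coeff 0 * h.coeff 1) ≠ 0 := C_ne_zero.2 hdet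
  constructor
  · refine sub_eq_zero.1 ((mul_eq_zero.1 ?_).resolve_left hC)
    · simp only [C_sub, C_mul]
      linear_combination C (h.coeff 0) * e1 - C (g.coeff 0) * e2
  · refine sub_eq_zero.1 ((mul_eq_zero.1 ?_).resolve_left hC)
    · simp only [C_sub, C_mul]
      linear_combination C (g.coeff 1) * e2 - C (h.coeff 1) * e1

theorem count {ι : Type} [Fintype ι] (f : ι → K[X]) (hsqf : ∀ i, Squarefree (f i))
    (hcop : ∀ i j, i ≠ j → IsCoprime (f i) (f j)) (d : ℕ) (hd : d = ∑ i, (f i).natDegree)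
    (hd2 : 2 ≤ d)
    (hcase : 3 ≤ d ∨ ∃ i j, i ≠ j ∧ (f i).natDegree = 1 ∧ (f j).natDegree = 1)
    (p : ℕ) [CharP K p] (hp : p.Prime) :
    ∃ s N0 c : ℕ, 0 < c ∧ ∀ N, N0 ≤ N → ∃ 𝒟 : Finset (ι → K[X]),
      Fintype.card K ^ (2 * (p * N)) ≤ c * 𝒟.card ∧
      ∀ D ∈ 𝒟, (∀ i, Squarefree (D i)) ∧ (∀ i j, i ≠ j → IsCoprime (D i) (D j)) ∧
        (∑ i, (D i).natDegree) ≤ d * (p * N + s) ∧ ∃ u v : K[X], ∀ i, D i = H (f i) u v := by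
  set F := ∏ i, f i with hF
  have hFs : Squarefree F := by
    refine Finset.squarefree_prod_of_pairwise_isCoprime ?_ (fun i _ => hsqf i)
    intro i _ j _ hij
    exact (hcop i j hij).isRelPrime
  have hFd : F.natDegree = d := by
    rw [hF, natDegree_prod _ _ (fun i _ => (hsqf i).ne_zero), hd]
  obtain ⟨s, N0, hsieve⟩ := sieve hFs (by omega) p hp
  refine ⟨s, N0, 4 * d ^ (16 * d ^ 2), by positivity, ?_⟩
  intro N hN
  obtain ⟨G, hG, hs, hpos, hGx⟩ := hsieve N hN
  refine ⟨G.image (fun x i => H (f i) x.1 x.2), ?_, ?_⟩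
  · refine hG.trans ?_
    rw [mul_assoc]
    refine Nat.mul_le_mul_left _ ?_
    refine Finset.card_le_mul_card_image G _ ?_
    intro D hD
    obtain ⟨x0, hx0, rfl⟩ := Finset.mem_image.1 hD
    set T := G.filter (fun x => (fun i => H (f i) x.1 x.2) = fun i => H (f i) x0.1 x0.2) with hT
    rcases hcase with h3 | ⟨i, j, hij, hi, hj⟩
    · have hfib := fiber_card hFs (by omega) (p * N) (p * N + s) (by omega) (by omega)
        (H F x0.1 x0.2) (hGx x0 hx0).2.2.2.1 (hGx x0 hx0).2.2.2.2 T (by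
          intro x hx
          obtain ⟨hxG, hxe⟩ := Finset.mem_filter.1 hx
          obtain ⟨a, b, c, _, _⟩ := hGx x hxG
          refine ⟨a, b, c, ?_⟩
          rw [hF, H_prod, H_prod]
          exact Finset.prod_congr rfl fun i _ => congrFun hxe i)
      rw [hFd] at hfib
      exact hfib
    · refine le_trans ?_ (Nat.one_le_pow _ _ (by omega))
      refine Finset.card_le_one.2 ?_
      intro x hx y hy
      have hx := (Finset.mem_filter.1 hx).2
      have hy := (Finset.mem_filter.1 hy).2
      have hxy := hx.trans hy.symm
      have := lin_inj (f i) (f j) x.1 x.2 y.1 y.2 hi hj (hcop i j hij) (congrFun hxy i)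
        (congrFun hxy j)
      exact Prod.ext this.1 this.2
  · intro D hD
    obtain ⟨x, hx, rfl⟩ := Finset.mem_image.1 hD
    obtain ⟨a, b, c, e, _⟩ := hGx x hx
    rw [hF, H_prod] at e
    refine ⟨?_, ?_, ?_, x.1, x.2, fun _ => rfl⟩
    · intro i
      exact e.squarefree_of_dvd (Finset.dvd_prod_of_mem (fun i => H (f i) x.1 x.2)
        (Finset.mem_univ i))
    · intro i j hij
      have h1 : H (f i) x.1 x.2 * H (f j) x.1 x.2 ∣ ∏ i, H (f i) x.1 x.2 := by
        rw [← Finset.mul_prod_erase Finset.univ _ (Finset.mem_univ i)]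
        exact mul_dvd_mul_left _ (Finset.dvd_prod_of_mem (fun i => H (f i) x.1 x.2)
          (Finset.mem_erase.2 ⟨hij.symm, Finset.mem_univ j⟩))
      exact (IsRelPrime.of_squarefree_mul (e.squarefree_of_dvd h1)).isCoprime
    · rw [hd, Finset.sum_mul]
      refine Finset.sum_le_sum fun i _ => natDegree_H_le _ _ _ _ b.le ?_
      exact natDegree_le_iff_degree_le.2 c.le

lemma degree_cases (ℓ : ℕ) (hℓ : ℓ.Prime) (hℓodd : Odd ℓ) (a : Fin (ℓ - 1) → ℕ) (d : ℕ)
    (hd : d = ∑ i, a i) (hd1 : 1 ≤ d)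
    (hmod : (∑ i : Fin (ℓ - 1), ((i : ℕ) + 1) * a i) % ℓ = 0) :
    2 ≤ d ∧ (3 ≤ d ∨ ∃ i j, i ≠ j ∧ a i = 1 ∧ a j = 1) := by
  have h1 : ∃ i, a i ≠ 0 := by
    by_contra h
    push Not at h
    simp [h] at hd
    omega
  obtain ⟨i, hi⟩ := h1
  have hsum := Finset.add_sum_erase Finset.univ a (Finset.mem_univ i)
  rw [← hd] at hsum
  have h2 : ∃ j, j ≠ i ∧ (a j ≠ 0 ∨ 3 ≤ d) := by
    by_contra h
    push Not at h
    by_cases h3 : 3 ≤ d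
    · have hl3 : 3 ≤ ℓ := by
        have := hℓ.two_le
        obtain ⟨k, hk⟩ := hℓodd
        omega
      haveI : Nontrivial (Fin (ℓ - 1)) := Fin.nontrivial_iff_two_le.2 (by omega)
      obtain ⟨j, hj⟩ := exists_ne i
      exact absurd h3 (by have := (h j hj).2; omega)
    have h0 : ∀ j, j ≠ i → a j = 0 := fun j hj => (h j hj).1
    rw [Finset.sum_eq_single i (fun j _ hj => by rw [h0 j hj, mul_zero])
      (fun h => absurd (Finset.mem_univ i) h)] at hmod
    have hz : ∑ x ∈ Finset.univ.erase i, a x = 0 :=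
      Finset.sum_eq_zero fun j hj => h0 j (Finset.ne_of_mem_erase hj)
    have hdv := Nat.dvd_of_mod_eq_zero hmod
    rcases hℓ.dvd_mul.1 hdv with h4 | h4
    · have := Nat.le_of_dvd (by omega) h4
      have := i.2
      omega
    · have := Nat.le_of_dvd (by omega) h4
      have := hℓ.two_le
      obtain ⟨k, hk⟩ := hℓodd
      omega
  obtain ⟨j, hji, hj⟩ := h2
  by_cases h3 : 3 ≤ d
  · exact ⟨by omega, Or.inl h3⟩
  have hj := hj.resolve_right h3
  have hle : a j ≤ ∑ x ∈ Finset.univ.erase i, a x :=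
    Finset.single_le_sum (fun _ _ => Nat.zero_le _)
      (Finset.mem_erase.2 ⟨hji, Finset.mem_univ j⟩)
  exact ⟨by omega, Or.inr ⟨i, j, hji.symm, by omega, by omega⟩⟩

end SE

/-- Theorem 3.8 (counting content): lower bound on the number of tuples
`(D₁, …, D_{ℓ-1})` of pairwise coprime squarefree polynomials with
`∑ deg Dᵢ ≤ n` and `Dᵢ = Fᵢ(u, v)` for some `u, v`, where `Fᵢ` is the
homogenization of `fᵢ`. -/
theorem stmt_0 (p e q ℓ : ℕ) (hp : p.Prime) (hpodd : Odd p) (he : 0 < e) (hq : q = p ^ e)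
    (hℓ : ℓ.Prime) (hℓodd : Odd ℓ) (hℓq : ¬ (ℓ ∣ q))
    (Fq : Type) [Field Fq] [Fintype Fq] (hcard : Fintype.card Fq = q)
    (f : Fin (ℓ - 1) → Fq[X])
    (hsqf : ∀ i, Squarefree (f i))
    (hcop : ∀ i j, i ≠ j → IsCoprime (f i) (f j))
    (d : ℕ) (hd : d = ∑ i, (f i).natDegree) (hd1 : 1 ≤ d)
    (hmod : (∑ i : Fin (ℓ - 1), ((i : ℕ) + 1) * (f i).natDegree) % ℓ = 0)
    (hnot : ¬ ∃ (c g : Fq[X]) (k : ℕ), IsUnit c ∧ Irreducible g ∧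
      (∏ i : Fin (ℓ - 1), (f i) ^ ((i : ℕ) + 1)) = c * g ^ k) :
    ∀ ε : ℝ, 0 < ε → ∃ B : ℝ, 0 < B ∧ ∃ N : ℕ, ∀ n : ℕ, N < n →
      (B * (q : ℝ) ^ ((2 * (n : ℝ) / (d : ℝ)) - ε) : ℝ) ≤
        (Nat.card {D : Fin (ℓ - 1) → Fq[X] //
          (∀ i, Squarefree (D i)) ∧
          (∀ i j, i ≠ j → IsCoprime (D i) (D j)) ∧
          (∑ i, (D i).natDegree) ≤ n ∧
          ∃ u v : Fq[X], ∀ i, D i =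
            ∑ j ∈ Finset.range ((f i).natDegree + 1),
              Polynomial.C ((f i).coeff j) * u ^ j * v ^ ((f i).natDegree - j)} : ℝ) := by
  intro ε hε
  obtain ⟨r, hr⟩ := CharP.exists Fq
  have hrp : r.Prime := CharP.char_is_prime Fq r
  obtain ⟨hd2, hcase⟩ := SE.degree_cases ℓ hℓ hℓodd (fun i => (f i).natDegree) d hd hd1 hmod
  obtain ⟨s, N0, c, hc, hcount⟩ := SE.count f hsqf hcop d hd hd2 hcase r hrp
  have hq2 : 2 ≤ q := hcard ▸ Fintype.one_lt_card
  have hq1 : (1 : ℝ) ≤ q := by exact_mod_cast (by omega : 1 ≤ q)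
  have hq0 : (0 : ℝ) < q := by linarith
  have hc0 : (0 : ℝ) < c := by exact_mod_cast hc
  refine ⟨1 / (c * (q : ℝ) ^ (2 * (s + r + 1))), by positivity, d * (s + r * N0), ?_⟩
  intro n hn
  set k := n / d with hk
  have hk1 : d * k ≤ n := Nat.mul_div_le n d
  have hk2 : n < d * (k + 1) := Nat.lt_mul_div_succ n (by omega)
  have hk3 : s + r * N0 ≤ k := by
    rw [hk, Nat.le_div_iff_mul_le (by omega), mul_comm]; exact hn.le
  set N := (k - s) / r with hN
  have hN1 : r * N ≤ k - s := Nat.mul_div_le _ _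
  have hN2 : k - s < r * (N + 1) := Nat.lt_mul_div_succ _ hrp.pos
  have hN3 : N0 ≤ N := by
    rw [hN, Nat.le_div_iff_mul_le hrp.pos, mul_comm]; omega
  obtain ⟨𝒟, h𝒟, hprop⟩ := hcount N hN3
  rw [hcard] at h𝒟
  set A := {D : Fin (ℓ - 1) → Fq[X] //
          (∀ i, Squarefree (D i)) ∧
          (∀ i j, i ≠ j → IsCoprime (D i) (D j)) ∧
          (∑ i, (D i).natDegree) ≤ n ∧
          ∃ u v : Fq[X], ∀ i, D i =
            ∑ j ∈ Finset.range ((f i).natDegree + 1),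
              Polynomial.C ((f i).coeff j) * u ^ j * v ^ ((f i).natDegree - j)} with hA
  have hfin : Finite A := by
    refine Finite.of_injective (fun (D : A) (i : Fin (ℓ - 1)) =>
      (⟨D.1 i, ?_⟩ : {x // x ∈ SE.S Fq (n + 1)})) ?_
    · rw [SE.mem_S_iff (D.2.1 i).ne_zero]
      have h1 := Finset.single_le_sum (f := fun i => (D.1 i).natDegree)
        (fun _ _ => Nat.zero_le _) (Finset.mem_univ i)
      have h2 := D.2.2.2.1
      omega
    · intro D E hDE
      apply Subtype.ext
      funext i
      exact congrArg Subtype.val (congrFun hDE i)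
  have hle : 𝒟.card ≤ Nat.card A := by
    have h1 : ∀ D : {x // x ∈ 𝒟}, ((∀ i, Squarefree (D.1 i)) ∧
          (∀ i j, i ≠ j → IsCoprime (D.1 i) (D.1 j)) ∧
          (∑ i, (D.1 i).natDegree) ≤ n ∧
          ∃ u v : Fq[X], ∀ i, D.1 i =
            ∑ j ∈ Finset.range ((f i).natDegree + 1),
              Polynomial.C ((f i).coeff j) * u ^ j * v ^ ((f i).natDegree - j)) := by
      intro D
      obtain ⟨a, b, c, u, v, huv⟩ := hprop D.1 D.2
      refine ⟨a, b, c.trans ?_, u, v, fun i => by rw [huv i, SE.H_eq_sum]⟩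
      exact (Nat.mul_le_mul_left d (by omega)).trans hk1
    have h2 := Nat.card_le_card_of_injective (fun D : {x // x ∈ 𝒟} => (⟨D.1, h1 D⟩ : A)) (by
      intro D E hDE
      exact Subtype.ext (congrArg (fun x : A => x.1) hDE))
    simpa using h2
  have hexp : (q : ℝ) ^ ((2 * (n : ℝ) / (d : ℝ)) - ε) ≤
      (q : ℝ) ^ (2 * (r * N)) * (q : ℝ) ^ (2 * (s + r + 1)) := by
    rw [← pow_add, ← Real.rpow_natCast]
    refine Real.rpow_le_rpow_of_exponent_le hq1 ?_
    have hd0 : (0 : ℝ) < d := by exact_mod_cast hd1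
    have h1 : (n : ℝ) ≤ d * (k + 1) := by exact_mod_cast hk2.le
    have h2 : (k : ℝ) ≤ r * N + s + r := by
      have : k ≤ r * N + s + r := by
        have : r * (N + 1) = r * N + r := by ring
        omega
      exact_mod_cast this
    have h3 : 2 * (n : ℝ) / d ≤ 2 * (k + 1) := by
      rw [div_le_iff₀ hd0]; nlinarith
    push_cast
    linarith
  have h𝒟' : (q : ℝ) ^ (2 * (r * N)) ≤ c * 𝒟.card := by exact_mod_cast h𝒟
  have hle' : (𝒟.card : ℝ) ≤ Nat.card A := by exact_mod_cast hle
  have hX : (0 : ℝ) < (q : ℝ) ^ (2 * (s + r + 1)) := by positivity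
  calc 1 / (c * (q : ℝ) ^ (2 * (s + r + 1))) * (q : ℝ) ^ ((2 * (n : ℝ) / (d : ℝ)) - ε)
      ≤ 1 / (c * (q : ℝ) ^ (2 * (s + r + 1))) *
        ((c * 𝒟.card) * (q : ℝ) ^ (2 * (s + r + 1))) := by
        refine mul_le_mul_of_nonneg_left (hexp.trans ?_) (by positivity)
        exact mul_le_mul_of_nonneg_right h𝒟' hX.le
    _ = 𝒟.card := by field_simp
    _ ≤ Nat.card A := hle'
end

section
/- Let q be an odd prime power not divisible by 3. Then for every ε > 0 there exist a real constant B > 0 and a natural number N such that for every integer n > N, the number of squarefree polynomials D ∈ 𝔽_q[t] with deg D ≤ n for which there exist u, v ∈ 𝔽_q[t] with D = u·(u − v)·(u + v), is at least B · q^{(2n/3) − ε}. -/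
open Polynomial

noncomputable section SF
open scoped Classical
variable {F : Type} [Field F] [Fintype F]

/-- polynomials of degree `< n` -/
def PL (F : Type) [Field F] [Fintype F] (n : ℕ) : Finset F[X] :=
  Finset.univ.image (fun c : Fin n → F => (((degreeLTEquiv F n).symm c : degreeLT F n) : F[X]))

/-- monic polynomials of degree `n` -/
def PM (F : Type) [Field F] [Fintype F] (n : ℕ) : Finset F[X] :=
  (PL F n).image (fun b => X ^ n + b)

/-- monic irreducible polynomials of degree `n` -/
def PI (F : Type) [Field F] [Fintype F] (n : ℕ) : Finset F[X] :=
  (PM F n).filter Irreducible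

lemma mem_PL {n : ℕ} {f : F[X]} : f ∈ PL F n ↔ f.degree < n := by
  unfold PL
  simp only [Finset.mem_image, Finset.mem_univ, true_and]
  constructor
  · rintro ⟨c, rfl⟩
    exact mem_degreeLT.1 ((degreeLTEquiv F n).symm c).2
  · intro h
    exact ⟨degreeLTEquiv F n ⟨f, mem_degreeLT.2 h⟩, by simp⟩

lemma card_PL (n : ℕ) : (PL F n).card = Fintype.card F ^ n := by
  unfold PL
  rw [Finset.card_image_of_injective]
  · simp
  · intro a b h
    exact (degreeLTEquiv F n).symm.injective (Subtype.ext h)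

lemma mem_PM {n : ℕ} {f : F[X]} : f ∈ PM F n ↔ f.Monic ∧ f.natDegree = n := by
  unfold PM
  simp only [Finset.mem_image, mem_PL]
  constructor
  · rintro ⟨b, hb, rfl⟩
    refine ⟨monic_X_pow_add hb, ?_⟩
    rw [natDegree_add_eq_left_of_degree_lt, natDegree_X_pow]
    simpa using hb
  · rintro ⟨h1, h2⟩
    refine ⟨f - X ^ n, ?_, by ring⟩
    have := degree_sub_lt_left (p := f) (q := X ^ n) ?_ h1.ne_zero ?_
    · rwa [degree_eq_natDegree h1.ne_zero, h2] at this
    · rw [degree_eq_natDegree h1.ne_zero, h2, degree_X_pow]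
    · rw [h1.leadingCoeff]; simp

lemma card_PM (n : ℕ) : (PM F n).card = Fintype.card F ^ n := by
  unfold PM
  rw [Finset.card_image_of_injective, card_PL]
  intro a b h
  simpa using h

lemma mem_PI {n : ℕ} {f : F[X]} : f ∈ PI F n ↔ (f.Monic ∧ f.natDegree = n) ∧ Irreducible f := by
  unfold PI
  rw [Finset.mem_filter, mem_PM]

/-- sieve count for a residue class -/
lemma card_class (f c : F[X]) (hf : f.Monic) (n : ℕ) (hn : f.natDegree ≤ n) :
    ((PL F n).filter (fun v => f ∣ c - v)).card ≤ Fintype.card F ^ (n - f.natDegree) := by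
  rw [← card_PL]
  apply Finset.card_le_card_of_injOn (fun v => v /ₘ f)
  · intro v hv
    simp only [Finset.coe_filter, Set.mem_ofPred_eq, mem_PL] at hv
    simp only [Finset.mem_coe, mem_PL]
    obtain ⟨hv, -⟩ := hv
    by_cases h0 : v /ₘ f = 0
    · rw [h0]; simp
    rw [degree_eq_natDegree h0, natDegree_divByMonic _ hf]
    have hv0 : v ≠ 0 := by rintro rfl; simp at h0
    have hle : f.natDegree ≤ v.natDegree := by
      by_contra h
      apply h0
      rw [divByMonic_eq_zero_iff hf, degree_eq_natDegree hv0, degree_eq_natDegree hf.ne_zero]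
      exact_mod_cast (not_le.1 h)
    rw [degree_eq_natDegree hv0] at hv
    have hv : v.natDegree < n := by exact_mod_cast hv
    norm_cast
    omega
  · intro v hv w hw h
    simp only [Finset.coe_filter, Set.mem_ofPred_eq, mem_PL] at hv hw
    have h1 : v %ₘ f = w %ₘ f := by
      rw [← sub_eq_zero, ← sub_modByMonic, modByMonic_eq_zero_iff_dvd hf]
      have := dvd_sub hw.2 hv.2
      simpa using this
    rw [← modByMonic_add_div v f, ← modByMonic_add_div w f, h1]
    simp only at h
    rw [h]

lemma card_monic_dvd (f : F[X]) (hf : f.Monic) (n : ℕ) (hn : f.natDegree ≤ n) :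
    ((PM F n).filter (fun a => f ∣ a)).card ≤ Fintype.card F ^ (n - f.natDegree) := by
  rw [← card_PM]
  refine le_trans (Finset.card_le_card (t := (PM F (n - f.natDegree)).image (fun b => f * b)) ?_)
    Finset.card_image_le
  intro a ha
  simp only [Finset.mem_filter, mem_PM] at ha
  obtain ⟨⟨h1, h2⟩, b, rfl⟩ := ha
  have hb : b.Monic := hf.of_mul_monic_left h1
  refine Finset.mem_image.2 ⟨b, mem_PM.2 ⟨hb, ?_⟩, rfl⟩
  rw [hf.natDegree_mul hb] at h2
  omega

lemma card_PI_one : (PI F 1).card ≤ Fintype.card F := by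
  refine le_trans (Finset.card_filter_le _ _) ?_
  rw [card_PM, pow_one]

lemma card_PI_succ (k : ℕ) (hk : 1 ≤ k) :
    (PI F (k+1)).card + Fintype.card F ^ k ≤ Fintype.card F ^ (k+1) := by
  have h1 : Disjoint (PI F (k+1)) ((PM F k).image (fun b => X * b)) := by
    rw [Finset.disjoint_left]
    intro f hf hf'
    obtain ⟨b, hb, rfl⟩ := Finset.mem_image.1 hf'
    have hi := (mem_PI.1 hf).2
    rcases hi.isUnit_or_isUnit rfl with h | h
    · exact not_isUnit_X h
    · have := natDegree_eq_zero_of_isUnit h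
      have := (mem_PM.1 hb).2
      omega
  have h2 : ((PM F k).image (fun b => X * b)).card = Fintype.card F ^ k := by
    rw [Finset.card_image_of_injective, card_PM]
    exact mul_right_injective₀ X_ne_zero
  rw [← h2, ← Finset.card_union_of_disjoint h1, ← card_PM]
  apply Finset.card_le_card
  intro f hf
  rcases Finset.mem_union.1 hf with h | h
  · exact mem_PM.2 (mem_PI.1 h).1
  · obtain ⟨b, hb, rfl⟩ := Finset.mem_image.1 h
    obtain ⟨hb, hb'⟩ := mem_PM.1 hb
    refine mem_PM.2 ⟨monic_X.mul hb, ?_⟩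
    rw [monic_X.natDegree_mul hb, natDegree_X, hb']
    omega

/-- partial sums of `∑ |P|^{-2}` -/
lemma sum_PI (K : ℕ) :
    ∑ k ∈ Finset.range K, ((PI F (k+1)).card : ℝ) / (Fintype.card F : ℝ) ^ (2 * (k+1)) ≤
      1 / (Fintype.card F : ℝ) + 1 / (Fintype.card F : ℝ) ^ 2 := by
  set q : ℝ := (Fintype.card F : ℝ) with hq
  have hq1 : 0 < q := by rw [hq]; exact_mod_cast Fintype.card_pos
  have key : ∀ K : ℕ, ∑ k ∈ Finset.range (K+1), ((PI F (k+1)).card : ℝ) / q ^ (2 * (k+1)) ≤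
      1 / q + 1 / q ^ 2 - 1 / q ^ (K+2) := by
    intro K
    induction K with
    | zero =>
      simp only [zero_add, Finset.range_one, Finset.sum_singleton, mul_one]
      have : ((PI F 1).card : ℝ) ≤ q := by rw [hq]; exact_mod_cast card_PI_one (F := F)
      calc ((PI F 1).card : ℝ) / q ^ 2 ≤ q / q ^ 2 := by gcongr
        _ = _ := by field_simp; ring
    | succ K ih =>
      rw [Finset.sum_range_succ]
      have h : ((PI F (K+1+1)).card : ℝ) + q ^ (K+1) ≤ q ^ (K+1+1) := by
        rw [hq]; exact_mod_cast card_PI_succ (F := F) (K+1) (by omega)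
      have h2 : ((PI F (K+1+1)).card : ℝ) / q ^ (2 * (K+1+1)) ≤ 1 / q ^ (K+2) - 1 / q ^ (K+3) := by
        calc _ ≤ (q ^ (K+1+1) - q ^ (K+1)) / q ^ (2 * (K+1+1)) := by gcongr; linarith
          _ = _ := by field_simp; ring
      have : K + 1 + 2 = K + 3 := rfl
      rw [this]
      linarith
  rcases K with _ | K
  · simp; positivity
  · have := key K
    have h3 : 0 < 1 / q ^ (K+2) := by positivity
    linarith

/-- lower bound for the number of irreducible polynomials -/
lemma card_PI_lower (hq : 5 ≤ Fintype.card F) (k : ℕ) (hk : 8 ≤ k) :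
    Fintype.card F ^ k ≤ 2 * k * (PI F k).card := by
  obtain ⟨p, hp⟩ := CharP.exists F
  have : Fact p.Prime := ⟨CharP.char_is_prime F p⟩
  have : NeZero k := ⟨by omega⟩
  let E := FiniteField.Extension F p k
  have : Fintype E := Fintype.ofFinite E
  have hcard : Fintype.card E = Fintype.card F ^ k := by
    rw [← Nat.card_eq_fintype_card, ← Nat.card_eq_fintype_card]
    exact FiniteField.natCard_extension F p k
  have hfin : Module.finrank F E = k := FiniteField.finrank_extension F p k
  have hIntegral : ∀ x : E, IsIntegral F x := fun x => IsIntegral.of_finite F x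
  have hdvd : ∀ x : E, (minpoly F x).natDegree ∣ k := fun x => by
    have := minpoly.degree_dvd (K := F) (L := E) (hIntegral x)
    rwa [hfin] at this
  have hfib : ∀ g : F[X], (Finset.univ.filter (fun x : E => minpoly F x = g)).card ≤ k := by
    intro g
    by_cases h : ∃ y : E, minpoly F y = g
    · obtain ⟨y, rfl⟩ := h
      have hne : (minpoly F y).map (algebraMap F E) ≠ 0 :=
        Polynomial.map_ne_zero (minpoly.ne_zero (hIntegral y))
      have hsub : (Finset.univ.filter (fun x : E => minpoly F x = minpoly F y)) ⊆
          ((minpoly F y).map (algebraMap F E)).roots.toFinset := by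
        intro x hx
        have hx := (Finset.mem_filter.1 hx).2
        rw [Multiset.mem_toFinset, mem_roots hne, IsRoot, eval_map_algebraMap, ← hx, minpoly.aeval]
      refine (Finset.card_le_card hsub).trans ((Multiset.toFinset_card_le _).trans
        ((card_roots' _).trans ?_))
      rw [natDegree_map]
      exact Nat.le_of_dvd (by omega) (hdvd y)
    · push Not at h
      rw [Finset.filter_false_of_mem]
      · simp
      · intro x _; exact h x
  have hmaps : ∀ x ∈ (Finset.univ : Finset E), minpoly F x ∈ PI F k ∪ PL F (k/2+1) := by
    intro x _
    rw [Finset.mem_union]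
    by_cases h : (minpoly F x).natDegree = k
    · left
      exact mem_PI.2 ⟨⟨minpoly.monic (hIntegral x), h⟩, minpoly.irreducible (hIntegral x)⟩
    · right
      rw [mem_PL, degree_eq_natDegree (minpoly.ne_zero (hIntegral x))]
      obtain ⟨c, hc⟩ := hdvd x
      have h2 : 2 ≤ c := by
        rcases c with _ | _ | c
        · omega
        · exfalso; apply h; omega
        · omega
      have : (minpoly F x).natDegree * 2 ≤ k := by
        have := Nat.mul_le_mul_left (minpoly F x).natDegree h2; omega
      have h3 : (minpoly F x).natDegree < k/2+1 := by omega
      exact_mod_cast h3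
  have h1 := Finset.card_le_mul_card_image_of_maps_to hmaps k (fun g _ => hfib g)
  rw [Finset.card_univ, hcard] at h1
  have h2 := Finset.card_union_le (PI F k) (PL F (k/2+1))
  rw [card_PL] at h2
  set q := Fintype.card F
  have h4 : ∀ e : ℕ, 2 ≤ e → 4 * e + 4 ≤ 5 ^ e := by
    intro e he
    induction e, he using Nat.le_induction with
    | base => norm_num
    | succ e he ih => rw [pow_succ]; omega
  have h5 : 2 * k * q ^ (k/2+1) ≤ q ^ k := by
    have : k = (k - k/2 - 1) + (k/2+1) := by omega
    calc 2 * k * q ^ (k/2+1) ≤ q ^ (k - k/2 - 1) * q ^ (k/2+1) := by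
          apply Nat.mul_le_mul_right
          have := h4 (k - k/2 - 1) (by omega)
          have h6 : 5 ^ (k - k/2 - 1) ≤ q ^ (k - k/2 - 1) := Nat.pow_le_pow_left hq _
          omega
      _ = q ^ k := by rw [← pow_add, ← this]
  have h6 : k * (PI F k ∪ PL F (k/2+1)).card ≤ k * ((PI F k).card + q ^ (k/2+1)) :=
    Nat.mul_le_mul_left _ h2
  nlinarith

lemma card_filter_prod_le {α β : Type} (s : Finset α) (t : Finset β) (p : α × β → Prop) (N : ℝ)
    (h : ∀ a ∈ s, ((t.filter (fun b => p (a, b))).card : ℝ) ≤ N) :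
    (((s ×ˢ t).filter p).card : ℝ) ≤ s.card * N := by
  have h1 : ((s ×ˢ t).filter p).card = ∑ a ∈ s, (t.filter (fun b => p (a, b))).card := by
    simp only [Finset.card_filter, Finset.sum_product]
  rw [h1]
  push_cast
  calc _ ≤ ∑ a ∈ s, N := Finset.sum_le_sum h
    _ = _ := by simp

/-- the cubic form on `u = a P`, `v` -/
def Phi (P : F[X]) (s : F[X] × F[X]) : F[X] :=
  (s.1 * P) * (s.1 * P - s.2) * (s.1 * P + s.2)

/-- good pairs -/
def GG (P : F[X]) (j m : ℕ) : Finset (F[X] × F[X]) :=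
  (PM F j ×ˢ PL F m).filter (fun s => Squarefree (Phi P s) ∧ ¬ P ∣ s.2)

/-- bad at a prime -/
def Bad (P π : F[X]) (s : F[X] × F[X]) : Prop :=
  π ^ 2 ∣ s.1 ∨ (π ∣ s.1 ∧ π ∣ s.2) ∨ π ^ 2 ∣ s.1 * P - s.2 ∨ π ^ 2 ∣ s.1 * P + s.2

lemma sqf_of (x : F[X]) (h0 : x ≠ 0)
    (h : ∀ π : F[X], π.Monic → Irreducible π → ¬ π ^ 2 ∣ x) : Squarefree x := by
  rw [squarefree_iff_irreducible_sq_not_dvd_of_ne_zero h0]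
  intro π hπ hd
  refine h (normalize π) (monic_normalize hπ.ne_zero) ?_ ?_
  · exact (associated_normalize π).irreducible hπ
  · have := (associated_normalize π).pow_pow (n := 2)
    rw [← sq] at hd
    exact (this.dvd_iff_dvd_left).1 hd

lemma sqf_Phi (h2 : (2 : F) ≠ 0) (P : F[X]) (j m : ℕ) (hj : 2 * j < m) (hP : P ∈ PI F (m - j))
    (s : F[X] × F[X]) (h1 : s.1 ∈ PM F j) (hv : s.2 ∈ PL F m) (hPv : ¬ P ∣ s.2)
    (hbad : ∀ k < m, ∀ π ∈ PI F (k+1), ¬ Bad P π s) : Squarefree (Phi P s) := by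
  obtain ⟨a, v⟩ := s
  simp only at h1 hv hPv
  obtain ⟨⟨hPm, hPd⟩, hPi⟩ := mem_PI.1 hP
  obtain ⟨ham, had⟩ := mem_PM.1 h1
  rw [mem_PL] at hv
  have hum : (a * P).Monic := ham.mul hPm
  have hud : (a * P).natDegree = m := by rw [ham.natDegree_mul hPm]; omega
  have hudeg : (a * P).degree = m := by rw [degree_eq_natDegree hum.ne_zero, hud]
  have hvu : v.degree < (a * P).degree := by rwa [hudeg]
  have hm1 : (a * P - v).degree = m := by rw [degree_sub_eq_left_of_degree_lt hvu, hudeg]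
  have hp1 : (a * P + v).degree = m := by rw [degree_add_eq_left_of_degree_lt hvu, hudeg]
  have hm0 : a * P - v ≠ 0 := by intro h; rw [h] at hm1; simp at hm1
  have hp0 : a * P + v ≠ 0 := by intro h; rw [h] at hp1; simp at hp1
  have hnb : ∀ π : F[X], π.Monic → Irreducible π → π.natDegree ≤ m → ¬ Bad P π (a, v) := by
    intro π hπ hi hd
    have := hi.natDegree_pos
    exact hbad (π.natDegree - 1) (by omega) π (mem_PI.2 ⟨⟨hπ, by omega⟩, hi⟩)
  have hPa : ¬ P ∣ a := by
    intro h
    have := natDegree_le_of_dvd h ham.ne_zero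
    omega
  have h2' : IsUnit (2 : F[X]) := by
    have : (2 : F[X]) = C 2 := (map_ofNat C 2).symm
    rw [this]
    exact isUnit_C.2 (isUnit_iff_ne_zero.2 h2)
  have hD0 : Phi P (a, v) ≠ 0 := mul_ne_zero (mul_ne_zero hum.ne_zero hm0) hp0
  apply sqf_of _ hD0
  intro π hπ hi hd
  unfold Phi at hd
  simp only at hd
  have hpr : Prime π := hi.prime
  -- no common divisor of u and v
  have hcop : ¬ (π ∣ a * P ∧ π ∣ v) := by
    rintro ⟨h, h'⟩
    have hdeg : π.natDegree ≤ m := hud ▸ natDegree_le_of_dvd h hum.ne_zero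
    rcases hpr.dvd_or_dvd h with h | h
    · exact hnb π hπ hi hdeg (Or.inr (Or.inl ⟨h, h'⟩))
    · have : π = P := eq_of_monic_of_associated hπ hPm (hi.associated_of_dvd hPi h)
      exact hPv (this ▸ h')
  have hc1 : ¬ (π ∣ a * P ∧ π ∣ a * P - v) := by
    rintro ⟨h, h'⟩
    exact hcop ⟨h, by simpa using dvd_sub h h'⟩
  have hc2 : ¬ (π ∣ a * P ∧ π ∣ a * P + v) := by
    rintro ⟨h, h'⟩
    exact hcop ⟨h, by simpa using dvd_sub h' h⟩
  have hc3 : ¬ (π ∣ a * P - v ∧ π ∣ a * P + v) := by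
    rintro ⟨h, h'⟩
    apply hc1
    refine ⟨?_, h⟩
    have h3 : π ∣ 2 * (a * P) := by
      have := dvd_add h h'
      convert this using 1
      ring
    exact (h2'.dvd_mul_left).1 h3
  have hdeg : ∀ x : F[X], x ≠ 0 → x.degree = m → π ^ 2 ∣ x → π.natDegree ≤ m := by
    intro x hx hxm hd
    have := natDegree_le_of_dvd hd hx
    rw [natDegree_eq_of_degree_eq_some hxm, natDegree_pow] at this
    omega
  have split : ∀ x y : F[X], π ^ 2 ∣ x * y → ¬ (π ∣ x ∧ π ∣ y) → π ^ 2 ∣ x ∨ π ^ 2 ∣ y := by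
    intro x y h hn
    by_cases hx : π ∣ x
    · left
      exact (hpr.pow_dvd_of_dvd_mul_right 2 (fun hy => hn ⟨hx, hy⟩) h)
    · right
      exact (hpr.pow_dvd_of_dvd_mul_left 2 hx h)
  have hcc : ¬ (π ∣ a * P * (a * P - v) ∧ π ∣ a * P + v) := by
    rintro ⟨h, h'⟩
    rcases hpr.dvd_or_dvd h with h | h
    · exact hc2 ⟨h, h'⟩
    · exact hc3 ⟨h, h'⟩
  rcases split _ _ hd hcc with h | h
  · rcases split _ _ h hc1 with h | h
    · have hd := hdeg _ hum.ne_zero hudeg h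
      have hx : ¬ (π ∣ a ∧ π ∣ P) := by
        rintro ⟨h, h'⟩
        have : π = P := eq_of_monic_of_associated hπ hPm (hi.associated_of_dvd hPi h')
        exact hPa (this ▸ h)
      rcases split _ _ h hx with h | h
      · exact hnb π hπ hi hd (Or.inl h)
      · have h' : π ∣ P := (dvd_pow_self π two_ne_zero).trans h
        have : π = P := eq_of_monic_of_associated hπ hPm (hi.associated_of_dvd hPi h')
        rw [this] at h
        have := natDegree_le_of_dvd h hPm.ne_zero
        rw [natDegree_pow] at this
        omega
    · exact hnb π hπ hi (hdeg _ hm0 hm1 h) (Or.inr (Or.inr (Or.inl h)))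
  · exact hnb π hπ hi (hdeg _ hp0 hp1 h) (Or.inr (Or.inr (Or.inr h)))

lemma pow_sub_div (q : ℝ) (hq : 0 < q) (n k : ℕ) (h : k ≤ n) : q ^ (n - k) = q ^ n / q ^ k := by
  rw [eq_div_iff (by positivity), ← pow_add]
  congr 1
  omega

lemma card_Bad (P π : F[X]) (j m k : ℕ) (hj : j < m) (hP : P ∈ PI F (m - j)) (hπ : π ∈ PI F k) :
    (((PM F j ×ˢ PL F m).filter (Bad P π)).card : ℝ) ≤
      4 * ((Fintype.card F : ℝ) ^ (j + m) / (Fintype.card F : ℝ) ^ (2 * k)) := by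
  set q : ℝ := (Fintype.card F : ℝ) with hq
  have hq1 : 0 < q := by rw [hq]; exact_mod_cast Fintype.card_pos
  obtain ⟨⟨hPm, hPd⟩, hPi⟩ := mem_PI.1 hP
  obtain ⟨⟨hπm, hπd⟩, hπi⟩ := mem_PI.1 hπ
  have hk0 : 0 < k := hπd ▸ hπi.natDegree_pos
  have hπ2 : (π ^ 2).Monic := hπm.pow 2
  have hπ2d : (π ^ 2).natDegree = 2 * k := by rw [natDegree_pow, hπd]
  have cPL : ((PL F m).card : ℝ) = q ^ m := by rw [card_PL, hq]; push_cast; rfl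
  have cPM : ((PM F j).card : ℝ) = q ^ j := by rw [card_PM, hq]; push_cast; rfl
  have dM : ∀ f : F[X], f.Monic →
      (((PM F j).filter (fun a => f ∣ a)).card : ℝ) ≤ q ^ j / q ^ f.natDegree := by
    intro f hf
    by_cases h : f.natDegree ≤ j
    · rw [← pow_sub_div q hq1 _ _ h, hq]
      exact_mod_cast card_monic_dvd f hf j h
    · rw [Finset.filter_false_of_mem]
      · simp; positivity
      · intro a ha hd
        have := natDegree_le_of_dvd hd (mem_PM.1 ha).1.ne_zero
        rw [(mem_PM.1 ha).2] at this
        omega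
  have B1 : (((PM F j ×ˢ PL F m).filter (fun s => π ^ 2 ∣ s.1)).card : ℝ) ≤
      q ^ (j + m) / q ^ (2 * k) := by
    have : (PM F j ×ˢ PL F m).filter (fun s => π ^ 2 ∣ s.1) =
        (PM F j).filter (fun a => π ^ 2 ∣ a) ×ˢ PL F m := by
      ext s; simp only [Finset.mem_filter, Finset.mem_product]; tauto
    rw [this, Finset.card_product]
    push_cast
    rw [cPL]
    have := dM _ hπ2
    rw [hπ2d] at this
    calc _ ≤ q ^ j / q ^ (2 * k) * q ^ m := by gcongr
      _ = _ := by rw [pow_add]; ring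
  have B2 : (((PM F j ×ˢ PL F m).filter (fun s => π ∣ s.1 ∧ π ∣ s.2)).card : ℝ) ≤
      q ^ (j + m) / q ^ (2 * k) := by
    have : (PM F j ×ˢ PL F m).filter (fun s => π ∣ s.1 ∧ π ∣ s.2) =
        (PM F j).filter (fun a => π ∣ a) ×ˢ (PL F m).filter (fun v => π ∣ v) := by
      ext s; simp only [Finset.mem_filter, Finset.mem_product]; tauto
    rw [this, Finset.card_product]
    push_cast
    have h1 := dM _ hπm
    rw [hπd] at h1
    by_cases hkj : k ≤ j
    · have h2 : (((PL F m).filter (fun v => π ∣ v)).card : ℝ) ≤ q ^ m / q ^ k := by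
        rw [← pow_sub_div q hq1 _ _ (by omega), hq, ← hπd]
        have := card_class π 0 hπm m (by omega)
        simp only [zero_sub, dvd_neg] at this
        exact_mod_cast this
      calc _ ≤ q ^ j / q ^ k * (q ^ m / q ^ k) := by gcongr
        _ = _ := by rw [pow_add, two_mul, pow_add]; field_simp
    · have : (PM F j).filter (fun a => π ∣ a) = ∅ := by
        rw [Finset.filter_false_of_mem]
        intro a ha hd
        have := natDegree_le_of_dvd hd (mem_PM.1 ha).1.ne_zero
        rw [(mem_PM.1 ha).2] at this
        omega
      rw [this]
      simp; positivity
  have hdegs : ∀ a ∈ PM F j, ∀ v ∈ PL F m,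
      (a * P - v ≠ 0 ∧ (a * P - v).natDegree = m) := by
    intro a ha v hv
    obtain ⟨ham, had⟩ := mem_PM.1 ha
    rw [mem_PL] at hv
    have hum : (a * P).Monic := ham.mul hPm
    have hud : (a * P).natDegree = m := by rw [ham.natDegree_mul hPm]; omega
    have hudeg : (a * P).degree = m := by rw [degree_eq_natDegree hum.ne_zero, hud]
    have hvu : v.degree < (a * P).degree := by rwa [hudeg]
    have hm1 : (a * P - v).degree = m := by rw [degree_sub_eq_left_of_degree_lt hvu, hudeg]
    refine ⟨?_, natDegree_eq_of_degree_eq_some hm1⟩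
    intro h; rw [h] at hm1; simp at hm1
  have hneg : ∀ v : F[X], v ∈ PL F m → -v ∈ PL F m := by
    intro v hv
    rw [mem_PL] at *
    rwa [degree_neg]
  have B3 : (((PM F j ×ˢ PL F m).filter (fun s => π ^ 2 ∣ s.1 * P - s.2)).card : ℝ) ≤
      q ^ (j + m) / q ^ (2 * k) := by
    refine (card_filter_prod_le _ _ _ (q ^ m / q ^ (2 * k)) ?_).trans ?_
    · intro a ha
      by_cases h : 2 * k ≤ m
      · rw [← pow_sub_div q hq1 _ _ h, hq, ← hπ2d]
        exact_mod_cast card_class (π ^ 2) (a * P) hπ2 m (by omega)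
      · rw [Finset.filter_false_of_mem]
        · simp; positivity
        · intro v hv hd
          obtain ⟨h1, h2⟩ := hdegs a ha v hv
          have := natDegree_le_of_dvd hd h1
          simp only at this
          omega
    · rw [cPM, pow_add]
      apply le_of_eq; ring
  have B4 : (((PM F j ×ˢ PL F m).filter (fun s => π ^ 2 ∣ s.1 * P + s.2)).card : ℝ) ≤
      q ^ (j + m) / q ^ (2 * k) := by
    refine (card_filter_prod_le _ _ _ (q ^ m / q ^ (2 * k)) ?_).trans ?_
    · intro a ha
      by_cases h : 2 * k ≤ m
      · rw [← pow_sub_div q hq1 _ _ h, hq, ← hπ2d]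
        have := card_class (π ^ 2) (-(a * P)) hπ2 m (by omega)
        have e : ∀ v : F[X], (π ^ 2 ∣ -(a * P) - v ↔ π ^ 2 ∣ a * P + v) := by
          intro v
          rw [← dvd_neg]
          congr! 1
          ring
        simp only [e] at this
        exact_mod_cast this
      · rw [Finset.filter_false_of_mem]
        · simp; positivity
        · intro v hv hd
          obtain ⟨h1, h2⟩ := hdegs a ha (-v) (hneg v hv)
          rw [sub_neg_eq_add] at h1 h2
          have := natDegree_le_of_dvd hd h1
          simp only at this
          omega
    · rw [cPM, pow_add]
      apply le_of_eq; ring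
  have hsub : (PM F j ×ˢ PL F m).filter (Bad P π) ⊆
      ((PM F j ×ˢ PL F m).filter (fun s => π ^ 2 ∣ s.1) ∪
      (PM F j ×ˢ PL F m).filter (fun s => π ∣ s.1 ∧ π ∣ s.2)) ∪
      ((PM F j ×ˢ PL F m).filter (fun s => π ^ 2 ∣ s.1 * P - s.2) ∪
      (PM F j ×ˢ PL F m).filter (fun s => π ^ 2 ∣ s.1 * P + s.2)) := by
    intro s
    simp only [Finset.mem_filter, Finset.mem_union, Bad]
    tauto
  have c := (Finset.card_le_card hsub).trans ((Finset.card_union_le _ _).trans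
    (add_le_add (Finset.card_union_le _ _) (Finset.card_union_le _ _)))
  have c := (Nat.cast_le (α := ℝ)).2 c
  push_cast at c
  linarith

lemma card_GG (h2 : (2 : F) ≠ 0) (h5 : 5 ≤ Fintype.card F) (P : F[X]) (j m : ℕ)
    (hj : 3 * j ≤ m) (hm : 6 ≤ m) (hP : P ∈ PI F (m - j)) :
    (Fintype.card F : ℝ) ^ (j + m) / 40 ≤ ((GG P j m).card : ℝ) := by
  set q : ℝ := (Fintype.card F : ℝ) with hq
  have hq5 : 5 ≤ q := by rw [hq]; exact_mod_cast h5
  have hq1 : 0 < q := by linarith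
  have cPL : ((PL F m).card : ℝ) = q ^ m := by rw [card_PL, hq]; push_cast; rfl
  have cPM : ((PM F j).card : ℝ) = q ^ j := by rw [card_PM, hq]; push_cast; rfl
  obtain ⟨⟨hPm, hPd⟩, hPi⟩ := mem_PI.1 hP
  have hsub : PM F j ×ˢ PL F m ⊆ GG P j m ∪
      ((PM F j ×ˢ (PL F m).filter (fun v => P ∣ v)) ∪
      (Finset.range m).biUnion (fun k => (PI F (k+1)).biUnion
        (fun π => (PM F j ×ˢ PL F m).filter (Bad P π)))) := by
    intro s hs
    by_contra hn
    simp only [Finset.mem_union, not_or, Finset.mem_biUnion, not_exists, not_and] at hn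
    obtain ⟨hn1, hn2, hn3⟩ := hn
    have hs' := Finset.mem_product.1 hs
    have hPv : ¬ P ∣ s.2 := by
      intro h
      exact hn2 (Finset.mem_product.2 ⟨hs'.1, Finset.mem_filter.2 ⟨hs'.2, h⟩⟩)
    apply hn1
    refine Finset.mem_filter.2 ⟨hs, ?_, hPv⟩
    apply sqf_Phi h2 P j m (by omega) hP s hs'.1 hs'.2 hPv
    intro k hk π hπ hb
    exact hn3 k (Finset.mem_range.2 hk) π hπ (Finset.mem_filter.2 ⟨hs, hb⟩)
  have c := (Finset.card_le_card hsub).trans ((Finset.card_union_le _ _).trans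
    (add_le_add le_rfl (Finset.card_union_le _ _)))
  have c := (Nat.cast_le (α := ℝ)).2 c
  rw [Finset.card_product, Finset.card_product] at c
  push_cast at c
  rw [cPL, cPM] at c
  have c1 : (((Finset.range m).biUnion (fun k => (PI F (k+1)).biUnion
        (fun π => (PM F j ×ˢ PL F m).filter (Bad P π)))).card : ℝ) ≤
        q ^ (j + m) * (4 * (1 / q + 1 / q ^ 2)) := by
    have d : ((Finset.range m).biUnion (fun k => (PI F (k+1)).biUnion
        (fun π => (PM F j ×ˢ PL F m).filter (Bad P π)))).card ≤
        ∑ k ∈ Finset.range m, ∑ π ∈ PI F (k+1), ((PM F j ×ˢ PL F m).filter (Bad P π)).card :=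
      Finset.card_biUnion_le.trans (Finset.sum_le_sum (fun k _ => Finset.card_biUnion_le))
    have d := (Nat.cast_le (α := ℝ)).2 d
    push_cast at d
    refine d.trans ?_
    calc _ ≤ ∑ k ∈ Finset.range m, ∑ π ∈ PI F (k+1), 4 * (q ^ (j + m) / q ^ (2 * (k+1))) :=
          Finset.sum_le_sum (fun k _ => Finset.sum_le_sum
            (fun π hπ => card_Bad P π j m (k+1) (by omega) hP hπ))
      _ = q ^ (j + m) * (4 * ∑ k ∈ Finset.range m, ((PI F (k+1)).card : ℝ) / q ^ (2 * (k+1))) := by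
          rw [Finset.mul_sum, Finset.mul_sum]
          apply Finset.sum_congr rfl
          intro k _
          rw [Finset.sum_const, nsmul_eq_mul]
          ring
      _ ≤ _ := by
          have := sum_PI (F := F) m
          gcongr
  have c2 : (((PL F m).filter (fun v => P ∣ v)).card : ℝ) ≤ q ^ m * (1 / 125) := by
    have := card_class P 0 hPm m (by omega)
    simp only [zero_sub, dvd_neg] at this
    have this : (((PL F m).filter (fun v => P ∣ v)).card : ℝ) ≤ q ^ (m - P.natDegree) := by
      rw [hq]; exact_mod_cast this
    rw [pow_sub_div q hq1 _ _ (by omega), hPd] at this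
    refine this.trans ?_
    rw [div_eq_mul_one_div]
    gcongr
    calc (125 : ℝ) = 5 ^ 3 := by norm_num
      _ ≤ q ^ 3 := by gcongr
      _ ≤ q ^ (m - j) := pow_le_pow_right₀ (by linarith) (by omega)
  have c3 : 4 * (1 / q + 1 / q ^ 2) ≤ 24 / 25 := by
    have : 1 / q ≤ 1 / 5 := by gcongr
    have h' : 1 / q ^ 2 ≤ 1 / 5 ^ 2 := by gcongr
    linarith
  have c4 : q ^ (j + m) * (4 * (1 / q + 1 / q ^ 2)) ≤ q ^ (j + m) * (24 / 25) := by gcongr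
  have c5 : q ^ j * (((PL F m).filter (fun v => P ∣ v)).card : ℝ) ≤ q ^ j * (q ^ m * (1/125)) := by
    gcongr
  have c6 : q ^ (j + m) = q ^ j * q ^ m := pow_add _ _ _
  have c7 : 0 < q ^ j * q ^ m := by positivity
  rw [c6] at c1 c4 ⊢
  linarith

lemma sq_cases (x y : F[X]) (h : x ^ 2 = y ^ 2) : ∃ σ : F[X], σ ∈ ({1, -1} : Finset F[X]) ∧ x = σ * y := by
  rcases sq_eq_sq_iff_eq_or_eq_neg.1 h with h | h
  · exact ⟨1, by simp, by simp [h]⟩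
  · exact ⟨-1, by simp, by simp [h]⟩

lemma deg_mul_lt (m : ℕ) (x y : F[X]) (hx : x.degree < m) (hy : y.degree < m) :
    (x * y).degree < ((2 * m : ℕ) : WithBot ℕ) := by
  by_cases hx0 : x = 0
  · rw [hx0, zero_mul, degree_zero]; exact WithBot.bot_lt_coe _
  by_cases hy0 : y = 0
  · rw [hy0, mul_zero, degree_zero]; exact WithBot.bot_lt_coe _
  rw [degree_eq_natDegree hx0] at hx
  rw [degree_eq_natDegree hy0] at hy
  rw [degree_eq_natDegree (mul_ne_zero hx0 hy0), natDegree_mul hx0 hy0]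
  have hx := Nat.cast_lt.1 hx
  have hy := Nat.cast_lt.1 hy
  exact Nat.cast_lt.2 (by omega)

lemma deg_quot (P h : F[X]) (j m : ℕ) (hj : j ≤ m) (hPm : P.Monic) (hPd : P.natDegree = m - j)
    (hh : (P ^ 2 * h).degree < ((2 * m : ℕ) : WithBot ℕ)) :
    h.degree < ((2 * j : ℕ) : WithBot ℕ) := by
  by_cases h0 : h = 0
  · rw [h0, degree_zero]; exact WithBot.bot_lt_coe _
  have hP0 : P ^ 2 ≠ 0 := pow_ne_zero _ hPm.ne_zero
  rw [degree_eq_natDegree (mul_ne_zero hP0 h0), natDegree_mul hP0 h0, natDegree_pow, hPd] at hh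
  have hh := Nat.cast_lt.1 hh
  rw [degree_eq_natDegree h0]
  exact Nat.cast_lt.2 (by omega)

set_option maxHeartbeats 1000000 in
lemma conic_count (h2 : (2 : F) ≠ 0) (P : F[X]) (j m : ℕ) (hj : 2 * j < m)
    (hP : P ∈ PI F (m - j)) (a a' : F[X]) (ha : a ∈ PM F j) (ha' : a' ∈ PM F j) (hne : a ≠ a')
    (A : Finset (F[X] × F[X]))
    (hA : ∀ s ∈ A, s.1 ∈ PL F m ∧ s.2 ∈ PL F m ∧ ¬ P ∣ s.1 ∧ ¬ P ∣ s.2 ∧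
      Phi P (a, s.1) = Phi P (a', s.2)) :
    A.card ≤ 4 * Fintype.card F ^ (2 * j) := by
  rcases A.eq_empty_or_nonempty with rfl | ⟨⟨w, w'⟩, hw⟩
  · simp
  obtain ⟨⟨hPm, hPd⟩, hPi⟩ := mem_PI.1 hP
  obtain ⟨ham, had⟩ := mem_PM.1 ha
  obtain ⟨ham', had'⟩ := mem_PM.1 ha'
  have hPr : Prime P := hPi.prime
  have h2' : IsUnit (2 : F[X]) := by
    have : (2 : F[X]) = C 2 := (map_ofNat C 2).symm
    rw [this]
    exact isUnit_C.2 (isUnit_iff_ne_zero.2 h2)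
  have hPa : ¬ P ∣ a := by
    intro h
    have := natDegree_le_of_dvd h ham.ne_zero
    omega
  have hM : a ^ 3 - a' ^ 3 ≠ 0 := by
    intro h
    have h : a ^ 3 = a' ^ 3 := sub_eq_zero.1 h
    apply hne
    apply eq_of_monic_of_associated ham ham'
    apply associated_of_dvd_dvd
    · exact (UniqueFactorizationMonoid.pow_dvd_pow_iff_dvd (n := 3) (by norm_num)).1 h.dvd
    · exact (UniqueFactorizationMonoid.pow_dvd_pow_iff_dvd (n := 3) (by norm_num)).1 h.symm.dvd
  set N : F[X] := P ^ 2 * (a ^ 3 - a' ^ 3) with hN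
  have hN0 : N ≠ 0 := mul_ne_zero (pow_ne_zero _ hPm.ne_zero) hM
  have conic : ∀ s ∈ A, a * s.1 ^ 2 - a' * s.2 ^ 2 = N := by
    intro s hs
    have h := (hA s hs).2.2.2.2
    simp only [Phi] at h
    apply mul_left_cancel₀ hPm.ne_zero
    rw [hN]
    linear_combination -h
  have hcw := conic _ hw
  obtain ⟨hw1, hw2, hw3, hw4, -⟩ := hA _ hw
  simp only at hcw hw1 hw2 hw3 hw4
  have main : ∀ s ∈ A, ∃ σ h κ : F[X], σ ∈ ({1, -1} : Finset F[X]) ∧ h ∈ PL F (2 * j) ∧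
      κ ∈ ({1, -1} : Finset F[X]) ∧ s.1 * w' - σ * s.2 * w = P ^ 2 * h ∧
      a * s.1 * w - σ * a' * s.2 * w' =
        κ * Classical.epsilon (fun r : F[X] => r ^ 2 = N ^ 2 + a * a' * P ^ 4 * h ^ 2) := by
    intro s hs
    obtain ⟨hs1, hs2, hs3, hs4, -⟩ := hA _ hs
    have hcs := conic _ hs
    obtain ⟨v, v'⟩ := s
    simp only at hs1 hs2 hs3 hs4 hcs ⊢
    have d1 : P ^ 2 ∣ a * ((v * w' - v' * w) * (v * w' + v' * w)) := by
      refine ⟨(a ^ 3 - a' ^ 3) * (w' ^ 2 - v' ^ 2), ?_⟩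
      rw [hN] at hcs hcw
      linear_combination w' ^ 2 * hcs - v' ^ 2 * hcw
    have d2 : P ^ 2 ∣ (v * w' - v' * w) * (v * w' + v' * w) :=
      hPr.pow_dvd_of_dvd_mul_left 2 hPa d1
    have d3 : ∃ σ : F[X], σ ∈ ({1, -1} : Finset F[X]) ∧ P ^ 2 ∣ v * w' - σ * v' * w := by
      by_cases hx : P ∣ v * w' - v' * w
      · refine ⟨1, by simp, ?_⟩
        rw [one_mul]
        refine hPr.pow_dvd_of_dvd_mul_right 2 (fun hy => ?_) d2
        have h3 : P ∣ 2 * (v * w') := by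
          have := dvd_add hx hy
          convert this using 1
          ring
        rcases hPr.dvd_or_dvd ((h2'.dvd_mul_left).1 h3) with h | h
        · exact hs3 h
        · exact hw4 h
      · refine ⟨-1, by simp, ?_⟩
        have := hPr.pow_dvd_of_dvd_mul_left 2 hx d2
        convert this using 1
        ring
    obtain ⟨σ, hσ, h, hh⟩ := d3
    have hσ2 : σ ^ 2 = 1 := by
      simp only [Finset.mem_insert, Finset.mem_singleton] at hσ
      rcases hσ with rfl | rfl <;> simp
    have hσd : σ.degree = 0 := by
      simp only [Finset.mem_insert, Finset.mem_singleton] at hσ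
      rcases hσ with rfl | rfl <;> simp
    have hk : (a * v * w - σ * a' * v' * w') ^ 2 = N ^ 2 + a * a' * P ^ 4 * h ^ 2 := by
      have e : a * a' * P ^ 4 * h ^ 2 = a * a' * (v * w' - σ * v' * w) ^ 2 := by rw [hh]; ring
      rw [e]
      have : N ^ 2 = (a * v ^ 2 - a' * v' ^ 2) * (a * w ^ 2 - a' * w' ^ 2) := by
        rw [hcs, hcw]; ring
      rw [this]
      linear_combination (a' ^ 2 * v' ^ 2 * w' ^ 2 - a * a' * v' ^ 2 * w ^ 2) * hσ2
    have hep := Classical.epsilon_spec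
      (p := fun r : F[X] => r ^ 2 = N ^ 2 + a * a' * P ^ 4 * h ^ 2) ⟨_, hk⟩
    obtain ⟨κ, hκ, hκ'⟩ := sq_cases _ _ (hk.trans hep.symm)
    refine ⟨σ, h, κ, hσ, ?_, hκ, hh, hκ'⟩
    rw [mem_PL] at hs1 hs2 hw1 hw2 ⊢
    have b2 : (P ^ 2 * h).degree < ((2 * m : ℕ) : WithBot ℕ) := by
      rw [← hh]
      refine lt_of_le_of_lt (degree_sub_le _ _) (max_lt (deg_mul_lt _ _ _ hs1 hw2) ?_)
      rw [mul_assoc, degree_mul, hσd, zero_add]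
      exact deg_mul_lt _ _ _ hs2 hw1
    exact deg_quot P h j m (by omega) hPm hPd b2
  choose! σ h κ hσ hh hκ e1 e2 using main
  have hcard : A.card ≤ (({1, -1} : Finset F[X]) ×ˢ PL F (2 * j) ×ˢ ({1, -1} : Finset F[X])).card := by
    apply Finset.card_le_card_of_injOn (fun s => (σ s, h s, κ s))
    · intro s hs
      simp only [Finset.coe_product, Set.mem_prod, Finset.mem_coe]
      exact ⟨hσ s hs, hh s hs, hκ s hs⟩
    · intro s hs t ht hst
      simp only [Prod.mk.injEq] at hst
      obtain ⟨q1, q2, q3⟩ := hst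
      have x1 := e1 s hs
      have x2 := e2 s hs
      have y1 := e1 t ht
      have y2 := e2 t ht
      rw [q1, q2] at x1
      rw [q1, q2, q3] at x2
      rw [← y1] at x1
      rw [← y2] at x2
      have z1 : s.1 = t.1 := by
        apply mul_left_cancel₀ hN0
        rw [← hcw]
        linear_combination w * x2 - a' * w' * x1
      have z2 : σ t * s.2 = σ t * t.2 := by
        apply mul_left_cancel₀ hN0
        rw [← hcw]
        linear_combination w' * x2 - a * w * x1
      have z3 : σ t ≠ 0 := by
        have := hσ t ht
        simp only [Finset.mem_insert, Finset.mem_singleton] at this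
        rcases this with h | h <;> rw [h] <;> simp
      exact Prod.ext z1 (mul_left_cancel₀ z3 z2)
  rw [Finset.card_product, Finset.card_product, card_PL] at hcard
  have h11 : ({1, -1} : Finset F[X]).card ≤ 2 := Finset.card_le_two
  calc A.card ≤ _ := hcard
    _ ≤ 2 * (Fintype.card F ^ (2 * j) * 2) := by gcongr
    _ = _ := by ring

lemma card_sq_le_image (s : Finset (F[X] × F[X])) (f : F[X] × F[X] → F[X]) :
    s.card ^ 2 ≤ (s.image f).card * ((s ×ˢ s).filter (fun p => f p.1 = f p.2)).card := by
  have h1 : s.card = ∑ b ∈ s.image f, (s.filter (fun a => f a = b)).card :=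
    Finset.card_eq_sum_card_fiberwise (fun a ha => Finset.mem_coe.2 (Finset.mem_image_of_mem f ha))
  have h2 : ((s ×ˢ s).filter (fun p => f p.1 = f p.2)).card =
      ∑ b ∈ s.image f, (s.filter (fun a => f a = b)).card ^ 2 := by
    rw [Finset.card_eq_sum_card_fiberwise (f := fun p => f p.1) (t := s.image f)]
    · apply Finset.sum_congr rfl
      intro b _
      rw [sq, ← Finset.card_product]
      congr 1
      ext p
      simp only [Finset.mem_filter, Finset.mem_product]
      constructor
      · rintro ⟨⟨⟨h1, h2⟩, h3⟩, h4⟩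
        exact ⟨⟨h1, h4⟩, h2, h3 ▸ h4⟩
      · rintro ⟨⟨h1, h4⟩, h2, h3⟩
        exact ⟨⟨⟨h1, h2⟩, h4.trans h3.symm⟩, h4⟩
    · intro p hp
      have := (Finset.mem_filter.1 (Finset.mem_coe.1 hp)).1
      exact Finset.mem_coe.2 (Finset.mem_image_of_mem f (Finset.mem_product.1 this).1)
  rw [h2]
  nth_rewrite 1 [h1]
  exact sq_sum_le_card_mul_sum_sq

lemma energy (h2 : (2 : F) ≠ 0) (P : F[X]) (j m : ℕ) (hj : 2 * j < m)
    (hP : P ∈ PI F (m - j)) :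
    ((GG P j m ×ˢ GG P j m).filter (fun p => Phi P p.1 = Phi P p.2)).card ≤
      2 * (GG P j m).card + 4 * Fintype.card F ^ (4 * j) := by
  obtain ⟨⟨hPm, hPd⟩, hPi⟩ := mem_PI.1 hP
  set G := GG P j m with hG
  have hGm : ∀ s ∈ G, s.1 ∈ PM F j ∧ s.2 ∈ PL F m ∧ ¬ P ∣ s.2 := by
    intro s hs
    obtain ⟨h1, -, h3⟩ := Finset.mem_filter.1 hs
    exact ⟨(Finset.mem_product.1 h1).1, (Finset.mem_product.1 h1).2, h3⟩
  set E2 := (G ×ˢ G).filter (fun p => Phi P p.1 = Phi P p.2 ∧ p.1.1 ≠ p.2.1) with hE2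
  have hsub : (G ×ˢ G).filter (fun p => Phi P p.1 = Phi P p.2) ⊆
      (G.image (fun s => (s, s)) ∪ G.image (fun s => (s, (s.1, -s.2)))) ∪ E2 := by
    rintro ⟨⟨a, v⟩, ⟨a', v'⟩⟩ hp
    obtain ⟨hp1, hp2⟩ := Finset.mem_filter.1 hp
    by_cases haa : a = a'
    · subst haa
      have hs := (Finset.mem_product.1 hp1).1
      have ha0 : a ≠ 0 := (mem_PM.1 (hGm _ hs).1).1.ne_zero
      apply Finset.mem_union_left
      have hv : v' ^ 2 = v ^ 2 := by
        apply mul_left_cancel₀ (mul_ne_zero ha0 hPm.ne_zero)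
        simp only [Phi] at hp2
        linear_combination hp2
      rcases sq_eq_sq_iff_eq_or_eq_neg.1 hv with rfl | rfl
      · exact Finset.mem_union_left _ (Finset.mem_image.2 ⟨_, hs, rfl⟩)
      · exact Finset.mem_union_right _ (Finset.mem_image.2 ⟨_, hs, rfl⟩)
    · exact Finset.mem_union_right _ (Finset.mem_filter.2 ⟨hp1, hp2, haa⟩)
  have hE2c : E2.card ≤ 4 * Fintype.card F ^ (2 * j) * (PM F j ×ˢ PM F j).card := by
    apply Finset.card_le_mul_card_image_of_maps_to (f := fun p => (p.1.1, p.2.1))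
    · intro p hp
      have := Finset.mem_product.1 (Finset.mem_filter.1 hp).1
      exact Finset.mem_product.2 ⟨(hGm _ this.1).1, (hGm _ this.2).1⟩
    · rintro ⟨a, a'⟩ haa
      obtain ⟨ha, ha'⟩ := Finset.mem_product.1 haa
      simp only at ha ha'
      by_cases hne : a = a'
      · rw [Finset.filter_false_of_mem]
        · simp
        · intro p hp hpe
          simp only [Prod.mk.injEq] at hpe
          exact (Finset.mem_filter.1 hp).2.2 (by rw [hpe.1, hpe.2, hne])
      · set T := E2.filter (fun p => (p.1.1, p.2.1) = (a, a')) with hT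
        have hTm : ∀ p ∈ T, p.1 ∈ G ∧ p.2 ∈ G ∧ Phi P p.1 = Phi P p.2 ∧ p.1.1 = a ∧ p.2.1 = a' := by
          intro p hp
          obtain ⟨h1, h2⟩ := Finset.mem_filter.1 hp
          obtain ⟨h3, h4⟩ := Finset.mem_filter.1 h1
          simp only [Prod.mk.injEq] at h2
          exact ⟨(Finset.mem_product.1 h3).1, (Finset.mem_product.1 h3).2, h4.1, h2.1, h2.2⟩
        have hc : T.card = (T.image (fun p => (p.1.2, p.2.2))).card := by
          rw [Finset.card_image_of_injOn]
          rintro ⟨⟨b, v⟩, ⟨b', v'⟩⟩ hp ⟨⟨c, w⟩, ⟨c', w'⟩⟩ hr h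
          obtain ⟨-, -, -, r1, r2⟩ := hTm _ hp
          obtain ⟨-, -, -, r3, r4⟩ := hTm _ hr
          simp only [Prod.mk.injEq] at *
          refine ⟨⟨r1.trans r3.symm, h.1⟩, r2.trans r4.symm, h.2⟩
        rw [hc]
        apply conic_count h2 P j m hj hP a a' ha ha' hne
        intro s hs
        obtain ⟨⟨⟨b, v⟩, ⟨b', v'⟩⟩, hp, rfl⟩ := Finset.mem_image.1 hs
        obtain ⟨r1, r2, r3, r4, r5⟩ := hTm _ hp
        simp only at r4 r5
        subst r4 r5
        exact ⟨(hGm _ r1).2.1, (hGm _ r2).2.1, (hGm _ r1).2.2, (hGm _ r2).2.2, r3⟩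
  have c := (Finset.card_le_card hsub).trans ((Finset.card_union_le _ _).trans
    (add_le_add ((Finset.card_union_le _ _).trans
      (add_le_add Finset.card_image_le Finset.card_image_le)) hE2c))
  refine c.trans ?_
  rw [Finset.card_product, card_PM]
  apply le_of_eq
  ring

lemma card_image_lower (h2 : (2 : F) ≠ 0) (h5 : 5 ≤ Fintype.card F) (P : F[X]) (j m : ℕ)
    (hj : 3 * j ≤ m) (hm : 6 ≤ m) (hP : P ∈ PI F (m - j)) :
    (Fintype.card F : ℝ) ^ (j + m) / 6480 ≤ (((GG P j m).image (Phi P)).card : ℝ) := by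
  have h1 := card_GG h2 h5 P j m hj hm hP
  have e := energy h2 P j m (by omega) hP
  have c := card_sq_le_image (GG P j m) (Phi P)
  set q : ℝ := (Fintype.card F : ℝ) with hq
  set g : ℝ := ((GG P j m).card : ℝ)
  set d : ℝ := (((GG P j m).image (Phi P)).card : ℝ)
  set x := ((GG P j m ×ˢ GG P j m).filter (fun p => Phi P p.1 = Phi P p.2)).card
  have hq5 : 5 ≤ q := by rw [hq]; exact_mod_cast h5
  have hp : 0 < q ^ (j + m) := by positivity
  have hg : 0 < g := by linarith
  have hd : 0 ≤ d := by positivity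
  have e := (Nat.cast_le (α := ℝ)).2 e
  have c := (Nat.cast_le (α := ℝ)).2 c
  push_cast at e c
  have e3 : q ^ (4 * j) ≤ q ^ (j + m) := pow_le_pow_right₀ (by linarith) (by omega)
  have e4 : (x : ℝ) ≤ 162 * g := by
    have : (x : ℝ) ≤ 2 * g + 4 * q ^ (4 * j) := e
    linarith
  have c1 : g ^ 2 ≤ d * (x : ℝ) := c
  have c2 : g ^ 2 ≤ d * (162 * g) := c1.trans (mul_le_mul_of_nonneg_left e4 hd)
  have c3 : g ≤ d * 162 := by
    by_contra hh
    push Not at hh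
    nlinarith
  linarith

lemma Phi_natDegree (P : F[X]) (j m : ℕ) (hj : j ≤ m) (hP : P ∈ PI F (m - j))
    (s : F[X] × F[X]) (hs : s ∈ GG P j m) : (Phi P s).natDegree = 3 * m := by
  obtain ⟨a, v⟩ := s
  obtain ⟨⟨hPm, hPd⟩, hPi⟩ := mem_PI.1 hP
  obtain ⟨h1, -, -⟩ := Finset.mem_filter.1 hs
  obtain ⟨h1, hv⟩ := Finset.mem_product.1 h1
  obtain ⟨ham, had⟩ := mem_PM.1 h1
  rw [mem_PL] at hv
  simp only at ham had hv
  have hum : (a * P).Monic := ham.mul hPm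
  have hud : (a * P).natDegree = m := by rw [ham.natDegree_mul hPm]; omega
  have hudeg : (a * P).degree = m := by rw [degree_eq_natDegree hum.ne_zero, hud]
  have hvu : v.degree < (a * P).degree := by rwa [hudeg]
  have hm1 : (a * P - v).degree = m := by rw [degree_sub_eq_left_of_degree_lt hvu, hudeg]
  have hp1 : (a * P + v).degree = m := by rw [degree_add_eq_left_of_degree_lt hvu, hudeg]
  have hm0 : a * P - v ≠ 0 := by intro h; rw [h] at hm1; simp at hm1
  have hp0 : a * P + v ≠ 0 := by intro h; rw [h] at hp1; simp at hp1
  simp only [Phi]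
  rw [natDegree_mul (mul_ne_zero hum.ne_zero hm0) hp0, natDegree_mul hum.ne_zero hm0, hud,
    natDegree_eq_of_degree_eq_some hm1, natDegree_eq_of_degree_eq_some hp1]
  omega

/-- big primes -/
def BP (F : Type) [Field F] [Fintype F] (m : ℕ) : Finset F[X] :=
  (Finset.range (m / 3 + 1)).biUnion (fun j => PI F (m - j))

/-- values with a given big prime -/
def VP (m : ℕ) (P : F[X]) : Finset F[X] := (GG P (m - P.natDegree) m).image (Phi P)

lemma mem_BP {m : ℕ} {P : F[X]} (h : P ∈ BP F m) :
    ∃ j, 3 * j ≤ m ∧ P ∈ PI F (m - j) ∧ m - P.natDegree = j := by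
  obtain ⟨j, hj, hP⟩ := Finset.mem_biUnion.1 h
  have hj := Finset.mem_range.1 hj
  refine ⟨j, by omega, hP, ?_⟩
  have := (mem_PI.1 hP).1.2
  omega

lemma mem_VP {m : ℕ} {P D : F[X]} (h : P ∈ BP F m) (hD : D ∈ VP m P) :
    Squarefree D ∧ D.natDegree = 3 * m ∧ P ∣ D ∧ ∃ u v : F[X], D = u * (u - v) * (u + v) := by
  obtain ⟨j, hj, hP, hPj⟩ := mem_BP h
  unfold VP at hD
  rw [hPj] at hD
  obtain ⟨s, hs, rfl⟩ := Finset.mem_image.1 hD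
  refine ⟨(Finset.mem_filter.1 hs).2.1, Phi_natDegree P j m (by omega) hP s hs, ?_,
    s.1 * P, s.2, rfl⟩
  unfold Phi
  exact Dvd.dvd.mul_right (Dvd.dvd.mul_right (dvd_mul_left _ _) _) _

lemma card_big (m : ℕ) (hm : 1 ≤ m) (D : F[X]) :
    ((BP F m).filter (fun P => D ∈ VP m P)).card ≤ 4 := by
  set T := (BP F m).filter (fun P => D ∈ VP m P) with hT
  rcases T.eq_empty_or_nonempty with h | ⟨P0, hP0⟩
  · rw [h]; simp
  have hTm : ∀ P ∈ T, P ∈ BP F m ∧ D ∈ VP m P := fun P hP => Finset.mem_filter.1 hP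
  obtain ⟨hsq, hdeg, -, -⟩ := mem_VP (hTm _ hP0).1 (hTm _ hP0).2
  have hmon : ∀ P ∈ T, P.Monic ∧ Irreducible P ∧ m - m / 3 ≤ P.natDegree := by
    intro P hP
    obtain ⟨j, hj, hPI, hPj⟩ := mem_BP (hTm _ hP).1
    obtain ⟨⟨h1, h2⟩, h3⟩ := mem_PI.1 hPI
    exact ⟨h1, h3, by omega⟩
  have hdvd : ∏ P ∈ T, P ∣ D := by
    apply Finset.prod_dvd_of_coprime
    · intro P hP Q hQ hne
      have hP' := hmon P hP
      have hQ' := hmon Q hQ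
      apply (hP'.2.1.coprime_iff_not_dvd).2
      intro h
      exact hne (eq_of_monic_of_associated hP'.1 hQ'.1 (hP'.2.1.associated_of_dvd hQ'.2.1 h))
    · intro P hP
      exact (mem_VP (hTm _ hP).1 (hTm _ hP).2).2.2.1
  have h1 := natDegree_le_of_dvd hdvd hsq.ne_zero
  rw [natDegree_prod_of_monic _ _ (fun P hP => (hmon P hP).1), hdeg] at h1
  have h2 : T.card * (m - m / 3) ≤ ∑ P ∈ T, P.natDegree := by
    rw [← smul_eq_mul]
    exact Finset.card_nsmul_le_sum _ _ _ (fun P hP => (hmon P hP).2.2)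
  by_contra hc
  have hc : 5 ≤ T.card := by omega
  have h3 : 5 * (m - m / 3) ≤ T.card * (m - m / 3) := Nat.mul_le_mul_right _ hc
  omega

lemma card_union_lower (h2 : (2 : F) ≠ 0) (h5 : 5 ≤ Fintype.card F) (m : ℕ) (hm : 12 ≤ m) :
    (Fintype.card F : ℝ) ^ (2 * m) / 155520 ≤ (((BP F m).biUnion (VP m)).card : ℝ) := by
  set q : ℝ := (Fintype.card F : ℝ) with hq
  have hq5 : 5 ≤ q := by rw [hq]; exact_mod_cast h5
  have hq0 : 0 < q := by linarith
  set U := (BP F m).biUnion (VP m) with hU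
  have e1 : ∑ P ∈ BP F m, (VP m P).card ≤ U.card * 4 := by
    have : ∑ P ∈ BP F m, (VP m P).card =
        ∑ D ∈ U, ((BP F m).filter (fun P => D ∈ VP m P)).card := by
      refine Eq.trans ?_ (Finset.sum_card_bipartiteAbove_eq_sum_card_bipartiteBelow
        (s := BP F m) (t := U) (r := fun P D => D ∈ VP m P))
      apply Finset.sum_congr rfl
      intro P hP
      congr 1
      ext D
      simp only [Finset.mem_bipartiteAbove, hU, Finset.mem_biUnion]
      constructor
      · intro h; exact ⟨⟨P, hP, h⟩, h⟩
      · exact fun h => h.2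
    rw [this, ← smul_eq_mul]
    exact Finset.sum_le_card_nsmul _ _ _ (fun D _ => card_big m (by omega) D)
  have e2 : ∑ P ∈ BP F m, (VP m P).card =
      ∑ j ∈ Finset.range (m / 3 + 1), ∑ P ∈ PI F (m - j), (VP m P).card := by
    unfold BP
    apply Finset.sum_biUnion
    intro i hi j hj hij
    have hi := Finset.mem_range.1 (Finset.mem_coe.1 hi)
    have hj := Finset.mem_range.1 (Finset.mem_coe.1 hj)
    show Disjoint (PI F (m - i)) (PI F (m - j))
    rw [Finset.disjoint_left]
    intro P h1 h2
    have h1 := (mem_PI.1 h1).1.2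
    have h2 := (mem_PI.1 h2).1.2
    omega
  have e3 : ∀ j ∈ Finset.range (m / 3 + 1),
      q ^ (2 * m) / (2 * m * 6480) ≤ ((∑ P ∈ PI F (m - j), (VP m P).card : ℕ) : ℝ) := by
    intro j hj
    have hj := Finset.mem_range.1 hj
    push_cast
    have f1 : ∀ P ∈ PI F (m - j), q ^ (j + m) / 6480 ≤ ((VP m P).card : ℝ) := by
      intro P hP
      have : m - P.natDegree = j := by
        have := (mem_PI.1 hP).1.2
        omega
      unfold VP
      rw [this]
      exact card_image_lower h2 h5 P j m (by omega) (by omega) hP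
    have f2 := Finset.card_nsmul_le_sum _ _ _ f1
    refine le_trans ?_ f2
    rw [nsmul_eq_mul]
    have f3 := (Nat.cast_le (α := ℝ)).2 (card_PI_lower (F := F) h5 (m - j) (by omega))
    push_cast at f3
    rw [← hq] at f3
    have hmj : ((m - j : ℕ) : ℝ) ≤ m := by exact_mod_cast Nat.sub_le m j
    have f4 : q ^ (m - j) ≤ 2 * m * ((PI F (m - j)).card : ℝ) := by
      refine f3.trans ?_
      gcongr
    have f5 : q ^ (2 * m) = q ^ (m - j) * q ^ (j + m) := by
      rw [← pow_add]; congr 1; omega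
    have hm0 : (0 : ℝ) < m := by
      have : 0 < m := by omega
      exact_mod_cast this
    rw [div_le_iff₀ (by positivity), f5]
    calc q ^ (m - j) * q ^ (j + m) ≤ 2 * m * ((PI F (m - j)).card : ℝ) * q ^ (j + m) := by gcongr
      _ = _ := by ring
  have e4 := Finset.card_nsmul_le_sum _ _ _ e3
  rw [Finset.card_range, nsmul_eq_mul] at e4
  have e5 : (∑ j ∈ Finset.range (m / 3 + 1), ((∑ P ∈ PI F (m - j), (VP m P).card : ℕ) : ℝ)) ≤
      (U.card : ℝ) * 4 := by
    rw [e2] at e1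
    exact_mod_cast e1
  have hm0 : (0 : ℝ) < m := by
    have : 0 < m := by omega
    exact_mod_cast this
  have e6 : (m : ℝ) / 3 ≤ ((m / 3 + 1 : ℕ) : ℝ) := by
    rw [div_le_iff₀ (by norm_num)]
    have : m ≤ (m / 3 + 1) * 3 := by omega
    exact_mod_cast this
  have e7 : (m : ℝ) / 3 * (q ^ (2 * m) / (2 * m * 6480)) ≤
      ((m / 3 + 1 : ℕ) : ℝ) * (q ^ (2 * m) / (2 * m * 6480)) := by gcongr
  have e8 : (m : ℝ) / 3 * (q ^ (2 * m) / (2 * m * 6480)) = q ^ (2 * m) / 38880 := by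
    field_simp; norm_num
  linarith

lemma count_lower (h2 : (2 : F) ≠ 0) (h5 : 5 ≤ Fintype.card F) (m n : ℕ) (hm : 12 ≤ m)
    (hn : 3 * m ≤ n) :
    (Fintype.card F : ℝ) ^ (2 * m) / 155520 ≤ (Nat.card {D : F[X] // Squarefree D ∧
      D.natDegree ≤ n ∧ ∃ u v : F[X], D = u * (u - v) * (u + v)} : ℝ) := by
  refine (card_union_lower h2 h5 m hm).trans ?_
  have : Nat.card {D : F[X] // Squarefree D ∧
      D.natDegree ≤ n ∧ ∃ u v : F[X], D = u * (u - v) * (u + v)} =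
      ((PL F (n + 1)).filter (fun D => Squarefree D ∧
      D.natDegree ≤ n ∧ ∃ u v : F[X], D = u * (u - v) * (u + v))).card := by
    apply Nat.subtype_card
    intro D
    rw [Finset.mem_filter, mem_PL]
    constructor
    · exact fun h => h.2
    · intro h
      refine ⟨?_, h⟩
      rw [degree_eq_natDegree h.1.ne_zero]
      exact Nat.cast_lt.2 (by omega)
  rw [this, Nat.cast_le]
  apply Finset.card_le_card
  intro D hD
  obtain ⟨P, hP, hD⟩ := Finset.mem_biUnion.1 hD
  obtain ⟨h1, h2, h3, h4⟩ := mem_VP hP hD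
  rw [Finset.mem_filter, mem_PL]
  refine ⟨?_, h1, by omega, h4⟩
  rw [degree_eq_natDegree h1.ne_zero]
  exact Nat.cast_lt.2 (by omega)

end SF

/-- For an odd prime power `q` not divisible by `3`, the number of squarefree
polynomials `D ∈ 𝔽_q[t]` of degree at most `n` of the form `D = u(u-v)(u+v)` with
`u, v ∈ 𝔽_q[t]` is at least `B · q^{2n/3 - ε}` for all large `n`. -/
theorem stmt_1 (p e q : ℕ) (hp : p.Prime) (hodd : Odd p) (he : 0 < e) (hq : q = p ^ e)
    (h3 : ¬ (3 ∣ q))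
    (Fq : Type) [Field Fq] [Fintype Fq] (hcard : Fintype.card Fq = q) :
    ∀ ε : ℝ, 0 < ε → ∃ B : ℝ, 0 < B ∧ ∃ N : ℕ, ∀ n : ℕ, N < n →
      (B * (q : ℝ) ^ ((2 * (n : ℝ) / 3) - ε) : ℝ) ≤
        (Nat.card {D : Fq[X] // Squarefree D ∧ D.natDegree ≤ n ∧
          ∃ u v : Fq[X], D = u * (u - v) * (u + v)} : ℝ) := by
  intro ε hε
  have hp5 : 5 ≤ p := by
    have h2 := hp.two_le
    have hne3 : p ≠ 3 := by
      rintro rfl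
      exact h3 (hq ▸ dvd_pow_self 3 he.ne')
    obtain ⟨c, hc⟩ := hodd
    omega
  have hq5 : 5 ≤ q := by
    rw [hq]
    exact hp5.trans (Nat.le_self_pow he.ne' p)
  have hqodd : Odd q := by rw [hq]; exact hodd.pow
  have h2 : (2 : Fq) ≠ 0 := by
    apply Ring.two_ne_zero
    intro hc
    have := FiniteField.even_card_iff_char_two.1 hc
    rw [hcard] at this
    obtain ⟨c, hc⟩ := hqodd
    omega
  have hq0 : (0 : ℝ) < q := by
    have : 0 < q := by omega
    exact_mod_cast this
  have hq1 : (1 : ℝ) ≤ q := by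
    have : 1 ≤ q := by omega
    exact_mod_cast this
  refine ⟨1 / (155520 * (q : ℝ) ^ 2), by positivity, 36, ?_⟩
  intro n hn
  have key := count_lower h2 (by omega) (n / 3) n (by omega) (by omega)
  rw [hcard] at key
  refine le_trans ?_ key
  have h1 : (q : ℝ) ^ ((2 * (n : ℝ) / 3) - ε) ≤ (q : ℝ) ^ (2 * (n / 3) + 2) := by
    rw [← Real.rpow_natCast]
    apply Real.rpow_le_rpow_of_exponent_le hq1
    have h4 : n ≤ 3 * (n / 3) + 2 := by omega
    have h5 : (n : ℝ) ≤ 3 * ((n / 3 : ℕ) : ℝ) + 2 := by exact_mod_cast h4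
    push_cast
    linarith
  calc 1 / (155520 * (q : ℝ) ^ 2) * (q : ℝ) ^ ((2 * (n : ℝ) / 3) - ε)
      ≤ 1 / (155520 * (q : ℝ) ^ 2) * (q : ℝ) ^ (2 * (n / 3) + 2) := by gcongr
    _ = (q : ℝ) ^ (2 * (n / 3)) / 155520 := by
      rw [pow_add]; field_simp
end

section
/- Let p be an odd prime with p ≡ 2 (mod 3) and let e be a positive integer with e ≡ 0 (mod 4); set q = p^e. Then the number of pairs (x, y) ∈ 𝔽_q × 𝔽_q satisfying y² = x³ + 1 is exactly p^e − 2·p^{e/2}. -/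
lemma aux_dvd (p : ℕ) [Fact p.Prime] (h3 : p % 3 = 2) (u v : ℤ)
    (h : (p : ℤ) ∣ u ^ 2 - u * v + v ^ 2) : (p : ℤ) ∣ u ∧ (p : ℤ) ∣ v := by
  have hp : p.Prime := Fact.out
  rw [← ZMod.intCast_zmod_eq_zero_iff_dvd, ← ZMod.intCast_zmod_eq_zero_iff_dvd]
  rw [← ZMod.intCast_zmod_eq_zero_iff_dvd] at h
  push_cast at h
  generalize (u : ZMod p) = x at *
  generalize (v : ZMod p) = y at *
  have h3' : (3 : ZMod p) ≠ 0 := by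
    intro h0
    have : ((3 : ℕ) : ZMod p) = 0 := by exact_mod_cast h0
    rw [ZMod.natCast_eq_zero_iff] at this
    have := (Nat.prime_dvd_prime_iff_eq hp Nat.prime_three).1 this
    omega
  by_cases hy : y = 0
  · subst hy
    simp at h
    exact ⟨h, rfl⟩
  exfalso
  set t : ZMod p := -x / y with ht
  have hx : x = -t * y := by rw [ht]; field_simp
  have h1 : t ^ 2 + t + 1 = 0 := by
    have : y ^ 2 * (t ^ 2 + t + 1) = 0 := by rw [← h, hx]; ring
    rcases mul_eq_zero.1 this with h' | h'
    · exact absurd (pow_eq_zero_iff (two_ne_zero) |>.1 h') hy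
    · exact h'
  have ht3 : t ^ 3 = 1 := by linear_combination (t - 1) * h1
  have ht1 : t ≠ 1 := by
    intro h'
    rw [h'] at h1
    apply h3'
    linear_combination h1
  have ht0 : t ≠ 0 := by
    intro h'
    rw [h'] at h1
    simp at h1
  have hord : orderOf t = 3 := orderOf_eq_prime ht3 ht1
  have := ZMod.orderOf_dvd_card_sub_one ht0
  rw [hord] at this
  have := hp.two_le
  omega

lemma aux_descent (p : ℕ) [Fact p.Prime] (h3 : p % 3 = 2) (m : ℕ) : ∀ (u v : ℤ),
    u ^ 2 - u * v + v ^ 2 = (p : ℤ) ^ (2 * m) →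
    ∃ u' v' : ℤ, u = p ^ m * u' ∧ v = p ^ m * v' ∧ u' ^ 2 - u' * v' + v' ^ 2 = 1 := by
  have hp0 : (p : ℤ) ≠ 0 := by exact_mod_cast (Fact.out : p.Prime).ne_zero
  induction m with
  | zero => intro u v h; exact ⟨u, v, by simp, by simp, by simpa using h⟩
  | succ m ih =>
    intro u v h
    obtain ⟨⟨a, rfl⟩, ⟨b, rfl⟩⟩ := aux_dvd p h3 u v
      (by rw [h]; exact dvd_pow_self _ (by omega))
    obtain ⟨u', v', rfl, rfl, h'⟩ := ih a b (by
      have : (p : ℤ) ^ 2 * (a ^ 2 - a * b + b ^ 2) = p ^ 2 * p ^ (2 * m) := by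
        rw [← pow_add, show 2 + 2 * m = 2 * (m + 1) by ring, ← h]; ring
      exact mul_left_cancel₀ (pow_ne_zero 2 hp0) this)
    exact ⟨u', v', by ring, by ring, h'⟩

lemma aux_small (a b : ℤ) (h : a ^ 2 - a * b + b ^ 2 = 1) :
    2 * a - b = -2 ∨ 2 * a - b = -1 ∨ 2 * a - b = 1 ∨ 2 * a - b = 2 := by
  have hb : b ^ 2 ≤ 1 := by nlinarith [sq_nonneg (2 * a - b)]
  have ha : a ^ 2 ≤ 1 := by nlinarith [sq_nonneg (2 * b - a)]
  have hb1 := abs_le.1 (sq_le_one_iff_abs_le_one b |>.1 hb)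
  have ha1 := abs_le.1 (sq_le_one_iff_abs_le_one a |>.1 ha)
  obtain ⟨h1, h2⟩ := hb1
  obtain ⟨h4, h5⟩ := ha1
  interval_cases a <;> interval_cases b <;> simp_all

open Classical in
lemma aux_char (F : Type) [Field F] [Fintype F] (h : 3 ∣ Fintype.card F - 1) :
    ∃ (ω : ℂ) (ψ : MulChar F ℂ) (a b : F → ℤ), ω ^ 2 + ω + 1 = 0 ∧ ψ ^ 3 = 1 ∧ ψ ≠ 1 ∧
      (∀ x, ψ x = a x + b x * ω) ∧ (∀ x, ψ⁻¹ x = a x + b x * ω ^ 2) ∧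
      (∀ u, ((Finset.univ.filter (fun x : F => x ^ 3 = u)).card : ℤ) = 1 + 2 * a u - b u) ∧
      (∀ u, ∃ d : ℤ, ((Finset.univ.filter (fun x : F => x ^ 3 = u)).card : ℤ) =
        3 * d + if u = 0 then 1 else 0) ∧
      (Finset.univ.filter (fun x : F => x ^ 3 = 1)).card = 3 := by
  have hω := Complex.isPrimitiveRoot_exp 3 (by norm_num)
  generalize Complex.exp (2 * Real.pi * Complex.I / (3 : ℕ)) = ω at hω
  obtain ⟨ψ, hψ⟩ := MulChar.exists_mulChar_orderOf F h hω
  have hω2 : ω ^ 2 + ω + 1 = 0 := by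
    have := hω.geom_sum_eq_zero (by norm_num)
    simp [Finset.sum_range_succ] at this
    linear_combination this
  have hω3 : ω ^ 3 = 1 := hω.pow_eq_one
  have hψ3 : ψ ^ 3 = 1 := by rw [← hψ]; exact pow_orderOf_eq_one ψ
  have hψ1 : ψ ≠ 1 := by
    intro h1; rw [h1, orderOf_one] at hψ; omega
  -- values
  have hval : ∀ x : F, x ≠ 0 → ψ x = 1 ∨ ψ x = ω ∨ ψ x = ω ^ 2 := by
    intro x hx
    obtain ⟨k, hk, hk'⟩ := MulChar.exists_apply_eq_pow hψ3 hω hx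
    interval_cases k <;> simp_all
  -- cubes
  obtain ⟨g, hg⟩ := IsCyclic.exists_generator (α := Fˣ)
  have hg1 : ψ g ≠ 1 := by
    intro h1
    apply hψ1
    rw [MulChar.eq_one_iff]
    intro x
    obtain ⟨k, rfl⟩ := (mem_powers_iff_mem_zpowers.2 (hg x))
    simp [h1]
  have hg3 : ψ g ^ 3 = 1 := by
    rw [← MulChar.pow_apply_coe, hψ3, MulChar.one_apply_coe]
  have hgo : orderOf (ψ g) = 3 := orderOf_eq_prime hg3 hg1
  have hcube : ∀ x : F, x ≠ 0 → ψ x = 1 → ∃ y, y ^ 3 = x := by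
    intro x hx h1
    obtain ⟨k, hk⟩ := (mem_powers_iff_mem_zpowers.2 (hg (Units.mk0 x hx)))
    have hk' : (g : F) ^ k = x := by
      have := congrArg (Units.val) hk
      simpa using this
    rw [← hk', map_pow] at h1
    have := orderOf_dvd_of_pow_eq_one h1
    rw [hgo] at this
    obtain ⟨j, rfl⟩ := this
    exact ⟨(g : F) ^ j, by rw [← hk']; ring⟩
  -- cube root of unity
  obtain ⟨z, hz⟩ : ∃ z : Fˣ, orderOf z = 3 := by
    apply exists_prime_orderOf_dvd_card
    rw [Fintype.card_units]; exact h
  have hzp : IsPrimitiveRoot (z : F) 3 := by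
    rw [← hz, ← orderOf_units]; exact IsPrimitiveRoot.orderOf _
  have hz2 : (z : F) ^ 2 + z + 1 = 0 := by
    have := hzp.geom_sum_eq_zero (by norm_num)
    simp [Finset.sum_range_succ] at this
    linear_combination this
  have hz1 : (z : F) ≠ 1 := hzp.ne_one (by norm_num)
  have hz0 : (z : F) ≠ 0 := z.ne_zero
  have hc3 : ∀ y : F, y ≠ 0 → (Finset.univ.filter (fun x : F => x ^ 3 = y ^ 3)).card = 3 := by
    intro y hy
    rw [Finset.card_eq_three]
    refine ⟨y, z * y, z ^ 2 * y, ?_, ?_, ?_, ?_⟩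
    · intro h'
      apply hz1
      apply mul_right_cancel₀ hy
      rw [← h', one_mul]
    · intro h'
      have := mul_right_cancel₀ hy ((one_mul y).trans h')
      exact hzp.pow_ne_one_of_pos_of_lt (by norm_num) (by norm_num) this.symm
    · intro h'
      have := mul_right_cancel₀ hy h'
      apply hz1
      apply mul_left_cancel₀ hz0
      rw [← pow_two, ← this, mul_one]
    · ext x
      simp only [Finset.mem_filter, Finset.mem_univ, true_and, Finset.mem_insert,
        Finset.mem_singleton]
      have key : x ^ 3 - y ^ 3 = (x - y) * ((x - z * y) * (x - z ^ 2 * y)) := by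
        linear_combination (x ^ 2 * y - x * y ^ 2 * z + (z - 1) * y ^ 3) * hz2
      rw [← sub_eq_zero, key, mul_eq_zero, mul_eq_zero, sub_eq_zero, sub_eq_zero, sub_eq_zero]
  have hc0 : (Finset.univ.filter (fun x : F => x ^ 3 = 0)).card = 1 := by
    rw [Finset.card_eq_one]
    refine ⟨0, ?_⟩
    ext x
    simp
  have hcn : ∀ u : F, u ≠ 0 → ψ u ≠ 1 →
      (Finset.univ.filter (fun x : F => x ^ 3 = u)).card = 0 := by
    intro u hu h1
    rw [Finset.card_eq_zero, Finset.filter_eq_empty_iff]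
    rintro x - rfl
    apply h1
    have hx : x ≠ 0 := by rintro rfl; simp at hu
    rw [map_pow, ← MulChar.pow_apply' ψ (by norm_num), hψ3, MulChar.one_apply]
    exact hx.isUnit
  have main : ∀ u : F, ∃ a b : ℤ, ψ u = a + b * ω ∧ ψ⁻¹ u = a + b * ω ^ 2 ∧
      ((Finset.univ.filter (fun x : F => x ^ 3 = u)).card : ℤ) = 1 + 2 * a - b ∧
      ∃ d : ℤ, ((Finset.univ.filter (fun x : F => x ^ 3 = u)).card : ℤ) =
        3 * d + if u = 0 then 1 else 0 := by
    intro u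
    by_cases hu : u = 0
    · subst hu
      refine ⟨0, 0, ?_, ?_, ?_, 0, ?_⟩
      · simp [MulChar.map_zero]
      · simp [MulChar.map_zero]
      · rw [hc0]; simp
      · rw [hc0]; simp
    have hinv : ψ⁻¹ u = (ψ u)⁻¹ := by
      rw [MulChar.inv_apply_eq_inv']
    have hω0 : ω ≠ 0 := by
      intro h'; rw [h'] at hω3; simp at hω3
    rw [hinv, if_neg hu]
    rcases hval u hu with h1 | h1 | h1
    · obtain ⟨y, rfl⟩ := hcube u hu h1
      have hy : y ≠ 0 := by rintro rfl; simp at hu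
      refine ⟨1, 0, ?_, ?_, ?_, 1, ?_⟩
      · simp only [h1]; simp
      · simp only [h1]; simp
      · rw [hc3 y hy]; simp
      · rw [hc3 y hy]; simp
    · have hne : ψ u ≠ 1 := by rw [h1]; exact hω.ne_one (by norm_num)
      refine ⟨0, 1, ?_, ?_, ?_, 0, ?_⟩
      · rw [h1]; simp
      · rw [h1, inv_eq_of_mul_eq_one_right]; simp; linear_combination hω3
      · rw [hcn u hu hne]; simp
      · rw [hcn u hu hne]; simp
    · have hne : ψ u ≠ 1 := by
        rw [h1]; exact hω.pow_ne_one_of_pos_of_lt (by norm_num) (by norm_num)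
      refine ⟨-1, -1, ?_, ?_, ?_, 0, ?_⟩
      · rw [h1]; push_cast; linear_combination hω2
      · rw [h1, inv_eq_of_mul_eq_one_right]; push_cast
        linear_combination - ω ^ 2 * hω2 + hω3
      · rw [hcn u hu hne]; simp
      · rw [hcn u hu hne]; simp
  choose a b h1 h2 h3 h4 using main
  refine ⟨ω, ψ, a, b, hω2, hψ3, hψ1, h1, h2, h3, h4, ?_⟩
  simpa using hc3 1 one_ne_zero

open Classical in
lemma aux_count (F : Type) [Field F] [Fintype F] (h : 3 ∣ Fintype.card F - 1)
    (h2 : ringChar F ≠ 2) (hodd : Odd (Fintype.card F)) :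
    ∃ u v : ℤ, u ^ 2 - u * v + v ^ 2 = Fintype.card F ∧
      (Nat.card {v : F × F // v.2 ^ 2 = v.1 ^ 3 + 1} : ℤ) = Fintype.card F + (2 * u - v) ∧
      (2 * u - v) % 3 = 1 ∧ (2 * u - v) % 2 = 0 := by
  obtain ⟨ω, ψ, a, b, hω, hψ3, hψ1, ha, hb, hc, hd, hc1⟩ := aux_char F h
  set χ := quadraticChar F with hχ
  set χC : MulChar F ℂ := χ.ringHomComp (Int.castRingHom ℂ) with hχC
  have hχ1 : χ ≠ 1 := quadraticChar_ne_one h2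
  have hχC1 : χC ≠ 1 := by
    rw [hχC, MulChar.ringHomComp_ne_one_iff (Int.castRingHom ℂ).injective_int]
    exact hχ1
  have hχC2 : χC ^ 2 = 1 := by
    have : χC.IsQuadratic := (quadraticChar_isQuadratic F).comp _
    exact this.sq_eq_one
  have hprod : ψ * χC ≠ 1 := by
    intro h1
    apply hχC1
    have : (ψ * χC) ^ 3 = 1 := by rw [h1, one_pow]
    rw [mul_pow, hψ3, one_mul, pow_succ, hχC2, one_mul] at this
    exact this
  have hχinv : χC⁻¹ = χC := by
    rw [inv_eq_iff_mul_eq_one, ← pow_two, hχC2]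
  have hJ := jacobiSum_mul_jacobiSum_inv (F := F) (F' := ℂ) (by
    rw [ringChar.eq_zero]
    exact (CharP.ringChar_ne_zero_of_finite F).symm) hψ1 hχC1 hprod
  rw [hχinv] at hJ
  set u : ℤ := ∑ x, a x * χ (1 - x) with hu
  set v : ℤ := ∑ x, b x * χ (1 - x) with hv
  have hχv : ∀ x, χC x = (χ x : ℂ) := fun x => by simp [hχC]
  have hJ1 : jacobiSum ψ χC = u + v * ω := by
    rw [jacobiSum, hu, hv]
    push_cast
    rw [Finset.sum_mul, ← Finset.sum_add_distrib]
    refine Finset.sum_congr rfl fun x _ => ?_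
    rw [ha, hχv]; ring
  have hJ2 : jacobiSum ψ⁻¹ χC = u + v * ω ^ 2 := by
    rw [jacobiSum, hu, hv]
    push_cast
    rw [Finset.sum_mul, ← Finset.sum_add_distrib]
    refine Finset.sum_congr rfl fun x _ => ?_
    rw [hb, hχv]; ring
  have hT : ∑ x : F, χ (1 - x ^ 3) =
      ∑ t : F, ((Finset.univ.filter (fun x : F => x ^ 3 = t)).card : ℤ) * χ (1 - t) := by
    rw [← Finset.sum_fiberwise (s := Finset.univ) (g := fun x : F => x ^ 3)]
    refine Finset.sum_congr rfl fun t _ => ?_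
    rw [Finset.sum_congr rfl (g := fun _ => χ (1 - t))]
    · simp
    · intro x hx
      rw [(Finset.mem_filter.1 hx).2]
  have hS : ∑ t : F, χ (1 - t) = 0 := by
    exact (Equiv.sum_comp (Equiv.subLeft (1 : F)) (fun t => χ t)).trans
      (MulChar.sum_eq_zero_of_ne_one hχ1)
  have hT1 : ∑ x : F, χ (1 - x ^ 3) = 2 * u - v := by
    rw [hT]
    have : ∀ t : F, ((Finset.univ.filter (fun x : F => x ^ 3 = t)).card : ℤ) * χ (1 - t) =
        χ (1 - t) + 2 * (a t * χ (1 - t)) - b t * χ (1 - t) := by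
      intro t; rw [hc]; ring
    rw [Finset.sum_congr rfl fun t _ => this t, Finset.sum_sub_distrib, Finset.sum_add_distrib,
      ← Finset.mul_sum, hS, zero_add]
  refine ⟨u, v, ?_, ?_, ?_, ?_⟩
  · rw [hJ1, hJ2] at hJ
    have : ((u ^ 2 - u * v + v ^ 2 : ℤ) : ℂ) = ((Fintype.card F : ℤ) : ℂ) := by
      push_cast
      rw [← hJ]
      linear_combination (- (u : ℂ) * v - (v : ℂ) ^ 2 * (ω - 1)) * hω
    exact_mod_cast this
  · rw [← hT1]
    have e : {v : F × F // v.2 ^ 2 = v.1 ^ 3 + 1} ≃ Σ x : F, {y : F // y ^ 2 = x ^ 3 + 1} :=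
      { toFun := fun w => ⟨w.1.1, w.1.2, w.2⟩
        invFun := fun w => ⟨(w.1, w.2.1), w.2.2⟩
        left_inv := fun _ => rfl
        right_inv := fun _ => rfl }
    rw [Nat.card_congr e, Nat.card_sigma]
    push_cast
    have : ∀ x : F, (Nat.card {y : F // y ^ 2 = x ^ 3 + 1} : ℤ) = χ (x ^ 3 + 1) + 1 := by
      intro x
      rw [← quadraticChar_card_sqrts h2, Nat.card_eq_fintype_card, Set.toFinset_card]
      rfl
    rw [Finset.sum_congr rfl fun x _ => this x, Finset.sum_add_distrib,
      ← Equiv.sum_comp (Equiv.neg F)]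
    simp only [Equiv.neg_apply, Finset.sum_const, Finset.card_univ, nsmul_eq_mul, mul_one]
    rw [add_comm]
    congr 1
    refine Finset.sum_congr rfl fun x _ => ?_
    congr 1; ring
  · rw [← hT1, hT]
    choose d hd using hd
    have : ∀ t : F, ((Finset.univ.filter (fun x : F => x ^ 3 = t)).card : ℤ) * χ (1 - t) =
        3 * (d t * χ (1 - t)) + if t = 0 then 1 else 0 := by
      intro t; rw [hd]
      split_ifs with h0
      · subst h0; simp
      · ring
    rw [Finset.sum_congr rfl fun t _ => this t, Finset.sum_add_distrib, ← Finset.mul_sum]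
    simp
  · rw [← hT1]
    have : ∀ x : F, ∃ k : ℤ, χ (1 - x ^ 3) = 2 * k + 1 - if x ^ 3 = 1 then 1 else 0 := by
      intro x
      split_ifs with h0
      · exact ⟨0, by rw [h0]; simp [MulChar.map_zero]⟩
      · rcases quadraticChar_dichotomy (F := F) (a := 1 - x ^ 3)
          (fun h' => h0 (sub_eq_zero.1 h').symm) with h' | h'
        · exact ⟨0, by rw [hχ, h']; simp⟩
        · exact ⟨-1, by rw [hχ, h']; simp⟩
    choose k hk using this
    rw [Finset.sum_congr rfl fun t _ => hk t, Finset.sum_sub_distrib, Finset.sum_add_distrib,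
      ← Finset.mul_sum, Finset.sum_boole, hc1]
    simp only [Finset.sum_const, Finset.card_univ, nsmul_eq_mul, mul_one]
    obtain ⟨r, hr⟩ := hodd
    rw [hr]; push_cast; omega

/-- For an odd prime `p ≡ 2 (mod 3)` and `e ≡ 0 (mod 4)`, `e > 0`, the affine curve
`y² = x³ + 1` has exactly `p^e - 2·p^(e/2)` points over the field with `p^e` elements. -/
theorem stmt_3 (p e : ℕ) [Fact p.Prime] (hodd : Odd p) (h3 : p % 3 = 2)
    (he : 0 < e) (he4 : e % 4 = 0) :
    (Nat.card {v : GaloisField p e × GaloisField p e // v.2 ^ 2 = v.1 ^ 3 + 1} : ℤ) =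
      (p : ℤ) ^ e - 2 * (p : ℤ) ^ (e / 2) := by
  obtain ⟨f, rfl⟩ : 4 ∣ e := Nat.dvd_of_mod_eq_zero he4
  have hp6 : p % 6 = 5 := by obtain ⟨r, hr⟩ := hodd; omega
  have hpow : ∀ k, p ^ (2 * k) % 6 = 1 := by
    intro k
    rw [pow_mul, Nat.pow_mod, Nat.pow_mod p 2, hp6]
    simp
  let _ : Fintype (GaloisField p (4 * f)) := Fintype.ofFinite _
  have hcard : Fintype.card (GaloisField p (4 * f)) = p ^ (4 * f) := by
    rw [← Nat.card_eq_fintype_card, GaloisField.card p _ (by omega)]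
  have hq := hpow (2 * f)
  rw [show 2 * (2 * f) = 4 * f by ring] at hq
  have hQ := hpow f
  obtain ⟨u, v, h1, h2, hm3, hm2⟩ := aux_count (GaloisField p (4 * f))
    (by rw [hcard]; omega)
    (by rw [ringChar.eq (GaloisField p (4 * f)) p]; rintro rfl; omega)
    (by rw [hcard]; exact hodd.pow)
  rw [h2, hcard]
  rw [hcard] at h1
  push_cast at h1
  rw [show 4 * f = 2 * (2 * f) by ring] at h1
  obtain ⟨a, b, rfl, rfl, hab⟩ := aux_descent p h3 (2 * f) u v h1
  rw [show 4 * f / 2 = 2 * f by omega]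
  push_cast
  have hs := aux_small a b hab
  rw [show 2 * ((p : ℤ) ^ (2 * f) * a) - p ^ (2 * f) * b = p ^ (2 * f) * (2 * a - b) by ring]
    at hm3 hm2 ⊢
  have hQ' : (p : ℤ) ^ (2 * f) % 6 = 1 := by exact_mod_cast hQ
  generalize (p : ℤ) ^ (2 * f) = Q at *
  rcases hs with hs | hs | hs | hs <;> rw [hs] at hm3 hm2 ⊢
  · ring
  all_goals omega
end
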